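/- arXiv:1808.03696 — 17 statements merged into one kernel-verified Lean document; each statement's English description precedes it below -/
import Mathlib

section
/- Let G be a finite simple graph containing an edge uv such that: exactly one connected component of G contains an edge; the vertex set of this component is U ∪ V, where U and V are disjoint independent sets of G with u ∈ U and v ∈ V; and every vertex of U ∪ V has a neighbor in N(u) ∪ N(v). Then for any two distinct vertices v′, v″ ∈ V, the distance between v′ and v″ in G is either 2 or 4, and consequently the graph obtained from G by adding the edge v′v″ contains a cycle of length 3 or a cycle of length 5. The same conclusion holds for any two distinct vertices of U. -/
open SimpleGraph

/-- `G` contains a cycle of length `m`. -/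
def hasCycleLength {α : Type*} (G : SimpleGraph α) (m : ℕ) : Prop :=
  ∃ (a : α) (w : G.Walk a a), w.IsCycle ∧ w.length = m

/-- The graph obtained from `G` by adding the edge `xy`. -/
def addEdge {α : Type*} (G : SimpleGraph α) (x y : α) : SimpleGraph α :=
  G ⊔ SimpleGraph.fromEdgeSet {s(x, y)}

theorem walk_parity {α : Type*} (G : SimpleGraph α) (S T : Set α)
    (hS : ∀ a ∈ S, ∀ b, G.Adj a b → b ∈ T) (hT : ∀ a ∈ T, ∀ b, G.Adj a b → b ∈ S)
    (hd : Disjoint S T) {a b : α} (p : G.Walk a b) (hb : b ∈ S) :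
    (a ∈ S → Even p.length) ∧ (a ∈ T → ¬ Even p.length) := by
  induction p with
  | nil =>
    exact ⟨fun _ => by simp, fun h => (Set.disjoint_left.1 hd hb h).elim⟩
  | cons hadj p ih =>
    obtain ⟨i1, i2⟩ := ih hb
    rw [SimpleGraph.Walk.length_cons, Nat.even_add_one]
    refine ⟨fun h => i2 (hS _ h _ hadj), fun h => ?_⟩
    rw [not_not]
    exact i1 (hT _ h _ hadj)

theorem key_side {α : Type*} (G : SimpleGraph α) (S T : Set α) (w : α)
    (hS : ∀ a ∈ S, ∀ b, G.Adj a b → b ∈ T) (hT : ∀ a ∈ T, ∀ b, G.Adj a b → b ∈ S)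
    (hd : Disjoint S T) (hw : ∀ x ∈ S, ∃ z, G.Adj x z ∧ G.Adj w z) :
    ∀ x ∈ S, ∀ y ∈ S, x ≠ y →
      (G.dist x y = 2 ∨ G.dist x y = 4) ∧
      (hasCycleLength (addEdge G x y) 3 ∨ hasCycleLength (addEdge G x y) 5) := by
  intro x hx y hy hxy
  obtain ⟨z, hxz, hwz⟩ := hw x hx
  obtain ⟨t, hyt, hwt⟩ := hw y hy
  let q : G.Walk x y := .cons hxz (.cons hwz.symm (.cons hwt (.cons hyt.symm .nil)))
  have hle : G.dist x y ≤ 4 := SimpleGraph.dist_le q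
  obtain ⟨p, hp, hlen⟩ := q.reachable.exists_path_of_dist
  have hev : Even (G.dist x y) := hlen ▸ (walk_parity G S T hS hT hd p hy).1 hx
  have hne : G.dist x y ≠ 0 := by
    intro h0
    exact hxy (q.reachable.dist_eq_zero_iff.1 h0)
  have hdist : G.dist x y = 2 ∨ G.dist x y = 4 := by
    obtain ⟨k, hk⟩ := hev
    omega
  have hnadj : ¬ G.Adj x y := fun h => Set.disjoint_left.1 hd hy (hS x hx y h)
  have hG : G ≤ addEdge G x y := le_sup_left
  have hadj : (addEdge G x y).Adj y x := by
    refine Or.inr ?_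
    rw [SimpleGraph.fromEdgeSet_adj]
    exact ⟨Sym2.eq_swap, hxy.symm⟩
  have hcyc : hasCycleLength (addEdge G x y) (G.dist x y + 1) := by
    refine ⟨y, .cons hadj (p.mapLe hG), ?_, by simp [hlen]⟩
    refine (SimpleGraph.Walk.cons_isCycle_iff _ _).2 ⟨hp.mapLe hG, fun hmem => ?_⟩
    rw [SimpleGraph.Walk.edges_mapLe_eq_edges] at hmem
    exact hnadj (p.adj_of_mem_edges hmem).symm
  refine ⟨hdist, ?_⟩
  rcases hdist with h | h <;> rw [h] at hcyc
  · exact Or.inl hcyc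
  · exact Or.inr hcyc

theorem stmt_0 {α : Type*} [Fintype α] (G : SimpleGraph α) (u v : α) (U V : Set α)
    (huv : G.Adj u v)
    (hcomp : ∃! c : G.ConnectedComponent, ∃ x y, G.Adj x y ∧ G.connectedComponentMk x = c)
    (hUV : {w | G.connectedComponentMk w = G.connectedComponentMk u} = U ∪ V)
    (hdisj : Disjoint U V)
    (hUind : ∀ a ∈ U, ∀ b ∈ U, ¬ G.Adj a b)
    (hVind : ∀ a ∈ V, ∀ b ∈ V, ¬ G.Adj a b)
    (huU : u ∈ U) (hvV : v ∈ V)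
    (hnbr : ∀ w ∈ U ∪ V, ∃ z ∈ G.neighborSet u ∪ G.neighborSet v, G.Adj w z) :
    (∀ v' ∈ V, ∀ v'' ∈ V, v' ≠ v'' →
      (G.dist v' v'' = 2 ∨ G.dist v' v'' = 4) ∧
      (hasCycleLength (addEdge G v' v'') 3 ∨ hasCycleLength (addEdge G v' v'') 5)) ∧
    (∀ u' ∈ U, ∀ u'' ∈ U, u' ≠ u'' →
      (G.dist u' u'' = 2 ∨ G.dist u' u'' = 4) ∧
      (hasCycleLength (addEdge G u' u'') 3 ∨ hasCycleLength (addEdge G u' u'') 5)) := by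
  have hcl : ∀ a ∈ U ∪ V, ∀ b, G.Adj a b → b ∈ U ∪ V := by
    intro a ha b hab
    rw [← hUV] at ha ⊢
    exact (SimpleGraph.ConnectedComponent.eq.2 hab.symm.reachable).trans ha
  have hU : ∀ a ∈ U, ∀ b, G.Adj a b → b ∈ V := fun a ha b hab =>
    (hcl a (Or.inl ha) b hab).resolve_left fun hb => hUind a ha b hb hab
  have hV : ∀ a ∈ V, ∀ b, G.Adj a b → b ∈ U := fun a ha b hab =>
    (hcl a (Or.inr ha) b hab).resolve_right fun hb => hVind a ha b hb hab
  refine ⟨key_side G V U v hV hU hdisj.symm ?_, key_side G U V u hU hV hdisj ?_⟩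
  · intro x hx
    obtain ⟨z, hz | hz, hxz⟩ := hnbr x (Or.inr hx)
    · exact (hVind x hx z (hU u huU z hz) hxz).elim
    · exact ⟨z, hxz, hz⟩
  · intro x hx
    obtain ⟨z, hz | hz, hxz⟩ := hnbr x (Or.inl hx)
    · exact ⟨z, hxz, hz⟩
    · exact (hUind x hx z (hV v hvV z hz) hxz).elim
end

section
/- Let k ≥ 3 and let ℓ = k if k is even and ℓ = k + 1 if k is odd. Let G be a finite simple graph containing an edge uv such that: exactly one connected component of G contains an edge; the vertex set of this component is U ∪ V, where U and V are disjoint independent sets of G with u ∈ U and v ∈ V; and, setting U₀ = {u′ ∈ U : d(u′,u) < ℓ} and V₀ = {v′ ∈ V : d(v′,v) < ℓ}, every vertex of U ∪ V has a neighbor in U₀ ∪ V₀. Then for any two distinct vertices v′, v″ ∈ V, the distance d(v′,v″) is even and at most 2k, and consequently the graph obtained from G by adding the edge v′v″ contains an odd cycle of length at most 2k + 1. The same conclusion holds for any two distinct vertices of U. -/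
open SimpleGraph

theorem walk_parity_aux {α : Type*} (G : SimpleGraph α) (A B : Set α)
    (hA : ∀ a ∈ A, ∀ b, G.Adj a b → b ∈ B) (hB : ∀ a ∈ B, ∀ b, G.Adj a b → b ∈ A)
    {x y : α} (w : G.Walk x y) :
    (x ∈ A → (Even w.length ∧ y ∈ A) ∨ (Odd w.length ∧ y ∈ B)) ∧
    (x ∈ B → (Even w.length ∧ y ∈ B) ∨ (Odd w.length ∧ y ∈ A)) := by
  induction w with
  | nil => simp
  | cons h p ih =>
    obtain ⟨ih1, ih2⟩ := ih
    simp only [Walk.length_cons, Nat.even_add_one, Nat.odd_add_one, Nat.not_even_iff_odd,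
      Nat.not_odd_iff_even]
    refine ⟨fun hx => ?_, fun hx => ?_⟩
    · have := ih2 (hA _ hx _ h)
      tauto
    · have := ih1 (hB _ hx _ h)
      tauto

theorem core_aux {α : Type*} (G : SimpleGraph α) (k ℓ : ℕ) (hk : 3 ≤ k)
    (hℓ : ℓ = if Even k then k else k + 1) (u : α) (A B : Set α)
    (hdisj : Disjoint A B)
    (hA : ∀ a ∈ A, ∀ b, G.Adj a b → b ∈ B) (hB : ∀ a ∈ B, ∀ b, G.Adj a b → b ∈ A)
    (hu : u ∈ A) (hr : ∀ a ∈ A ∪ B, G.Reachable a u)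
    (hn : ∀ b ∈ B, ∃ z ∈ A, G.dist z u < ℓ ∧ G.Adj b z) :
    ∀ v' ∈ B, ∀ v'' ∈ B, v' ≠ v'' →
      (Even (G.dist v' v'') ∧ G.dist v' v'' ≤ 2 * k) ∧
      (∃ m, Odd m ∧ m ≤ 2 * k + 1 ∧ hasCycleLength (addEdge G v' v'') m) := by
  have hlev : Even ℓ ∧ ℓ ≤ k + 1 := by
    subst hℓ
    split_ifs with h
    · exact ⟨h, by omega⟩
    · exact ⟨by simpa [Nat.even_add_one] using h, le_rfl⟩
  have key : ∀ b ∈ B, ∃ w : G.Walk b u, w.length + 1 ≤ ℓ := by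
    intro b hb
    obtain ⟨z, hz, hd, hadj⟩ := hn b hb
    obtain ⟨w, hw⟩ := (hr z (Or.inl hz)).exists_walk_length_eq_dist
    refine ⟨Walk.cons hadj w, ?_⟩
    have he : Even w.length := by
      rcases (walk_parity_aux G A B hA hB w).1 hz with h | h
      · exact h.1
      · exact (Set.disjoint_left.mp hdisj hu h.2).elim
    obtain ⟨a, ha⟩ := he
    obtain ⟨c, hc⟩ := hlev.1
    simp only [Walk.length_cons]
    omega
  intro v' hv' v'' hv'' hne
  obtain ⟨w1, h1⟩ := key v' hv'
  obtain ⟨w2, h2⟩ := key v'' hv''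
  have hle : G.dist v' v'' ≤ 2 * k := by
    have := G.dist_le (w1.append w2.reverse)
    rw [Walk.length_append, Walk.length_reverse] at this
    omega
  obtain ⟨p, hp, hpl⟩ := (w1.append w2.reverse).reachable.exists_path_of_dist
  have hev : Even p.length := by
    rcases (walk_parity_aux G A B hA hB p).2 hv' with h | h
    · exact h.1
    · exact (Set.disjoint_left.mp hdisj h.2 hv'').elim
  refine ⟨⟨hpl ▸ hev, hle⟩, p.length + 1, hev.add_one, by omega, ?_⟩
  have hG : G ≤ addEdge G v' v'' := le_sup_left
  have hadj : (addEdge G v' v'').Adj v'' v' := by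
    simp [addEdge, hne, hne.symm]
  refine ⟨v'', Walk.cons hadj (p.mapLe hG), ?_, by simp⟩
  rw [Walk.cons_isCycle_iff]
  refine ⟨(Walk.isPath_mapLe hG).2 hp, ?_⟩
  rw [Walk.edges_mapLe_eq_edges]
  intro hmem
  exact Set.disjoint_left.mp hdisj (hB _ hv'' _ (p.adj_of_mem_edges hmem)) hv'

theorem stmt_1 {α : Type*} [Fintype α] (G : SimpleGraph α) (k ℓ : ℕ) (hk : 3 ≤ k)
    (hℓ : ℓ = if Even k then k else k + 1)
    (u v : α) (U V : Set α)
    (huv : G.Adj u v)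
    (hcomp : ∃! c : G.ConnectedComponent, ∃ x y, G.Adj x y ∧ G.connectedComponentMk x = c)
    (hUV : {w | G.connectedComponentMk w = G.connectedComponentMk u} = U ∪ V)
    (hdisj : Disjoint U V)
    (hUind : ∀ a ∈ U, ∀ b ∈ U, ¬ G.Adj a b)
    (hVind : ∀ a ∈ V, ∀ b ∈ V, ¬ G.Adj a b)
    (huU : u ∈ U) (hvV : v ∈ V)
    (hnbr : ∀ w ∈ U ∪ V, ∃ z ∈ {u' ∈ U | G.dist u' u < ℓ} ∪ {v' ∈ V | G.dist v' v < ℓ},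
      G.Adj w z) :
    (∀ v' ∈ V, ∀ v'' ∈ V, v' ≠ v'' →
      (Even (G.dist v' v'') ∧ G.dist v' v'' ≤ 2 * k) ∧
      (∃ m, Odd m ∧ m ≤ 2 * k + 1 ∧ hasCycleLength (addEdge G v' v'') m)) ∧
    (∀ u' ∈ U, ∀ u'' ∈ U, u' ≠ u'' →
      (Even (G.dist u' u'') ∧ G.dist u' u'' ≤ 2 * k) ∧
      (∃ m, Odd m ∧ m ≤ 2 * k + 1 ∧ hasCycleLength (addEdge G u' u'') m)) := by
  have hmem : ∀ w, w ∈ U ∪ V ↔ G.Reachable w u := by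
    intro w
    rw [← hUV]
    simp [ConnectedComponent.eq]
  have hA : ∀ a ∈ U, ∀ b, G.Adj a b → b ∈ V := by
    intro a ha b hab
    rcases (hmem b).2 (hab.symm.reachable.trans ((hmem a).1 (Or.inl ha))) with h | h
    · exact (hUind a ha b h hab).elim
    · exact h
  have hB : ∀ a ∈ V, ∀ b, G.Adj a b → b ∈ U := by
    intro a ha b hab
    rcases (hmem b).2 (hab.symm.reachable.trans ((hmem a).1 (Or.inr ha))) with h | h
    · exact h
    · exact (hVind a ha b h hab).elim
  refine ⟨core_aux G k ℓ hk hℓ u U V hdisj hA hB huU (fun a ha => (hmem a).1 ha) ?_,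
    core_aux G k ℓ hk hℓ v V U hdisj.symm hB hA hvV
      (fun a ha => ((hmem a).1 (Set.union_comm V U ▸ ha)).trans huv.reachable) ?_⟩
  · intro b hb
    obtain ⟨z, hz | hz, hadj⟩ := hnbr b (Or.inr hb)
    · exact ⟨z, hz.1, hz.2, hadj⟩
    · exact (hVind b hb z hz.1 hadj).elim
  · intro b hb
    obtain ⟨z, hz | hz, hadj⟩ := hnbr b (Or.inl hb)
    · exact (hUind b hb z hz.1 hadj).elim
    · exact ⟨z, hz.1, hz.2, hadj⟩
end

section
/- Let G be a finite simple graph that is 2-good and contains no odd cycle of length at least 5 (i.e., no cycle C_{2j+1} for any j ≥ 2). Then G contains no cycle of length at least 5 at all, i.e., no cycle C_m for any m ≥ 5. -/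
open SimpleGraph

/-- A vertex `w` of `H` is good if all but at most one of the edges of `H` incident
to `w` are contained in a triangle of `H`. -/
def goodVertex {α : Type*} (H : SimpleGraph α) (w : α) : Prop :=
  {z | H.Adj w z ∧ ¬ ∃ t, H.Adj w t ∧ H.Adj z t}.Subsingleton

/-- `G` is `k`-good: there is a set `B` of at most `k` edges of `G` such that every
vertex of `G − B` is good in `G − B`. -/
def kGood {α : Type*} (G : SimpleGraph α) (k : ℕ) : Prop :=
  ∃ B : Set (Sym2 α), B ⊆ G.edgeSet ∧ B.ncard ≤ k ∧ ∀ w, goodVertex (G.deleteEdges B) w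

theorem closePath {α : Type*} {G : SimpleGraph α} {a b : α} (p : G.Walk a b) (hp : p.IsPath)
    (hl : 2 ≤ p.length) (h : G.Adj b a) : hasCycleLength G (p.length + 1) := by
  refine ⟨b, Walk.cons h p, ?_, by simp⟩
  rw [Walk.cons_isCycle_iff]
  refine ⟨hp, fun hmem => ?_⟩
  have := hp.reverse.length_eq_one_of_mem_edges (by simpa using hmem)
  simp at this
  omega

theorem noTriangle {α : Type*} {G : SimpleGraph α}
    (hnoodd : ∀ m, 5 ≤ m → Odd m → ¬ hasCycleLength G m) {u v t : α}
    (p : G.Walk v u) (hp : p.IsPath) (hl : 5 ≤ p.length) (ho : Odd p.length)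
    (huv : G.Adj u v) (hut : G.Adj u t) (hvt : G.Adj v t) : False := by
  classical
  by_cases ht : t ∈ p.support
  · have hlen : (p.takeUntil t ht).length + (p.dropUntil t ht).length = p.length := by
      rw [← Walk.length_append, Walk.take_spec]
    have hp1 := hp.takeUntil ht
    have hp2 := hp.dropUntil ht
    have hu : u ∉ (p.takeUntil t ht).support := Walk.endpoint_notMem_support_takeUntil hp ht hut.ne
    have hv : v ∉ (p.dropUntil t ht).reverse.support := by
      intro hm
      rw [Walk.support_reverse, List.mem_reverse] at hm
      have hnd := hp.support_nodup
      rw [← Walk.take_spec p ht, Walk.support_append] at hnd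
      refine List.disjoint_of_nodup_append hnd (Walk.start_mem_support _) ?_
      rw [Walk.mem_support_iff] at hm
      exact hm.resolve_left hvt.ne
    have c1 := fun h => closePath _ hp1 h hvt.symm
    have c2 := fun h => closePath _ hp2 h hut
    have c3 := fun h => closePath (Walk.cons huv (p.takeUntil t ht)) (hp1.cons hu) h hut.symm
    have c4 := fun h => closePath (Walk.cons huv.symm (p.dropUntil t ht).reverse)
      (hp2.reverse.cons hv) h hvt.symm
    simp only [Walk.length_cons, Walk.length_reverse] at c3 c4
    have a0 : (p.takeUntil t ht).length ≠ 0 := fun h => hvt.ne (Walk.eq_of_length_eq_zero h)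
    have b0 : (p.dropUntil t ht).length ≠ 0 := fun h => hut.ne' (Walk.eq_of_length_eq_zero h)
    generalize (p.takeUntil t ht).length = a at *
    generalize (p.dropUntil t ht).length = b at *
    have n1 := hnoodd (a+1)
    have n2 := hnoodd (b+1)
    have n3 := hnoodd (a+1+1)
    have n4 := hnoodd (b+1+1)
    simp only [Nat.odd_iff] at *
    rcases Nat.mod_two_eq_zero_or_one a with ha | ha
    · by_cases h4 : 4 ≤ a
      · exact n1 (by omega) (by omega) (c1 (by omega))
      · exact n4 (by omega) (by omega) (c4 (by omega))
    · by_cases h4 : 3 ≤ a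
      · exact n3 (by omega) (by omega) (c3 (by omega))
      · exact n2 (by omega) (by omega) (c2 (by omega))
  · refine hnoodd (p.length + 2) (by omega) (by simpa [Nat.odd_add] using ho) ?_
    exact closePath (Walk.cons hvt.symm p) (hp.cons ht) (by simp; omega) hut

theorem cycleSnd {α : Type*} {G : SimpleGraph α}
    (hnoodd : ∀ m, 5 ≤ m → Odd m → ¬ hasCycleLength G m) {w : α} (c : G.Walk w w)
    (hc : c.IsCycle) (hl : 6 ≤ c.length) (he : Even c.length) :
    ¬ ∃ t, G.Adj w t ∧ G.Adj c.snd t := by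
  rintro ⟨t, h1, h2⟩
  have hlen := c.length_tail_add_one hc.not_nil
  refine noTriangle hnoodd c.tail hc.isPath_tail (by omega) ?_ (c.adj_snd hc.not_nil) h1 h2
  rw [← hlen] at he
  rcases he with ⟨k, hk⟩
  exact ⟨k - 1, by omega⟩

theorem stmt_2 {α : Type*} [Fintype α] (G : SimpleGraph α)
    (h2good : kGood G 2)
    (hnoodd : ∀ m, 5 ≤ m → Odd m → ¬ hasCycleLength G m) :
    ∀ m, 5 ≤ m → ¬ hasCycleLength G m := by
  classical
  rintro m hm ⟨a, c, hc, rfl⟩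
  have he : Even c.length := by
    by_contra h
    exact hnoodd _ hm (Nat.not_even_iff_odd.1 h) ⟨a, c, hc, rfl⟩
  have h6 : 6 ≤ c.length := by
    rcases he with ⟨k, hk⟩; omega
  obtain ⟨B, -, hB2, hgood⟩ := h2good
  have hfin : B.Finite := Set.toFinite B
  have key : ∀ w ∈ c.support, ∃ e ∈ B, w ∈ e := by
    intro w hw
    by_contra hno
    push Not at hno
    have hd := hc.rotate hw
    have hdl : (c.rotate w hw).length = c.length := by simp
    generalize c.rotate w hw = d at hd hdl
    have k1 := cycleSnd hnoodd d hd (by omega) (by rwa [hdl])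
    have k2 := cycleSnd hnoodd d.reverse hd.reverse (by simp; omega) (by simpa [hdl] using he)
    rw [Walk.snd_reverse] at k2
    have hadj : ∀ z, G.Adj w z → (¬ ∃ t, G.Adj w t ∧ G.Adj z t) →
        z ∈ {z | (G.deleteEdges B).Adj w z ∧
          ¬ ∃ t, (G.deleteEdges B).Adj w t ∧ (G.deleteEdges B).Adj z t} := by
      intro z hz hn
      refine ⟨?_, ?_⟩
      · rw [deleteEdges_adj]
        exact ⟨hz, fun hb => hno _ hb (by simp)⟩
      · rintro ⟨t, h1, h2⟩
        rw [deleteEdges_adj] at h1 h2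
        exact hn ⟨t, h1.1, h2.1⟩
    exact hd.snd_ne_penultimate (hgood w (hadj _ (d.adj_snd hd.not_nil) k1)
      (hadj _ (d.adj_penultimate hd.not_nil).symm k2))
  have hsub : c.support.tail.toFinset ⊆ hfin.toFinset.biUnion (fun e => e.toFinset) := by
    intro w hw
    obtain ⟨e, h1, h2⟩ := key w (List.mem_of_mem_tail (by simpa using hw))
    simp only [Finset.mem_biUnion, Set.Finite.mem_toFinset, Sym2.mem_toFinset]
    exact ⟨e, h1, h2⟩
  have h1 := Finset.card_le_card hsub
  have h2 := Finset.card_biUnion_le_card_mul hfin.toFinset (fun e => e.toFinset) 2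
    (fun e _ => by rw [Sym2.card_toFinset]; split <;> omega)
  rw [List.toFinset_card_of_nodup hc.support_nodup] at h1
  rw [← Set.ncard_eq_toFinset_card B hfin] at h2
  rw [List.length_tail, Walk.length_support] at h1
  omega
end

section
/- Every finite simple graph G on n vertices that contains no cycle of length at least 5 (i.e., no cycle C_m for any m ≥ 5) has at most 2n − 2 edges. -/
open SimpleGraph

open Classical in
/-- degree into `S` -/
noncomputable def degIn {α : Type*} (G : SimpleGraph α) (S : Finset α) (v : α) : ℕ :=
  (S.filter (fun w => G.Adj v w)).card

/-- paths inside `S`, as lists -/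
def PathIn {α : Type*} (G : SimpleGraph α) (S : Finset α) (l : List α) : Prop :=
  l.Nodup ∧ l.IsChain G.Adj ∧ ∀ x ∈ l, x ∈ S

theorem cycle_of_list {α : Type*} (G : SimpleGraph α) (l : List α) (hne : l ≠ [])
    (hl : l.Nodup) (hc : l.IsChain G.Adj) (h5 : 5 ≤ l.length)
    (hadj : G.Adj (l.head hne) (l.getLast hne)) : hasCycleLength G l.length := by
  refine ⟨_, Walk.cons hadj.symm (Walk.ofSupport l hne hc), ?_, ?_⟩
  · have hp : (Walk.ofSupport l hne hc).IsPath := by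
      rw [Walk.isPath_def, Walk.support_ofSupport]
      exact hl
    rw [Walk.cons_isCycle_iff]
    refine ⟨hp, fun hm => ?_⟩
    have := hp.length_eq_one_of_mem_edges (by rwa [Sym2.eq_swap] at hm)
    rw [Walk.length_ofSupport] at this
    omega
  · rw [Walk.length_cons, Walk.length_ofSupport]
    omega

theorem nbr_of_longest {α : Type*} (G : SimpleGraph α)
    (h : ∀ m, 5 ≤ m → ¬ hasCycleLength G m) (S : Finset α) (a : α) (l : List α)
    (hl : PathIn G S (a :: l)) (hmax : ∀ l', PathIn G S l' → l'.length ≤ (a :: l).length)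
    (w : α) (hw : w ∈ S) (haw : G.Adj a w) : w ∈ l.take 3 := by
  obtain ⟨h1, h2, h3⟩ := hl
  have hwl : w ∈ l := by
    by_contra hn
    have := hmax (w :: a :: l) ⟨by
      rw [List.nodup_cons]
      refine ⟨?_, h1⟩
      rw [List.mem_cons]
      rintro (rfl | h')
      · exact haw.ne rfl
      · exact hn h', by
      rw [List.isChain_cons_cons]
      exact ⟨haw.symm, h2⟩, by
      intro x hx
      rcases List.mem_cons.1 hx with rfl | hx
      · exact hw
      · exact h3 x hx⟩
    simp at this
  obtain ⟨s, t, rfl⟩ := List.append_of_mem hwl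
  by_cases hs : s.length < 3
  · rw [List.take_append]
    apply List.mem_append_right
    obtain ⟨k, hk⟩ : ∃ k, 3 - s.length = k + 1 := ⟨2 - s.length, by omega⟩
    rw [hk]
    simp
  · exfalso
    have e : a :: (s ++ w :: t) = (a :: (s ++ [w])) ++ t := by simp
    rw [e] at h1 h2
    refine h _ ?_ (cycle_of_list G (a :: (s ++ [w])) (by simp) h1.of_append_left
      h2.left_of_append ?_ ?_)
    · simp; omega
    · simp; omega
    · simpa using haw

theorem exists_longest {α : Type*} (G : SimpleGraph α) (S : Finset α) :
    ∃ l, PathIn G S l ∧ ∀ l', PathIn G S l' → l'.length ≤ l.length := by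
  classical
  have hb : ∀ l, PathIn G S l → l.length ≤ S.card := by
    intro l hl
    rw [← List.toFinset_card_of_nodup hl.1]
    exact Finset.card_le_card (fun x hx => hl.2.2 x (by simpa using hx))
  obtain ⟨l, hl, hl'⟩ := Nat.findGreatest_spec (P := fun m => ∃ l, PathIn G S l ∧ l.length = m)
    (m := 0) (n := S.card) (Nat.zero_le _) ⟨[], by simp [PathIn], rfl⟩
  refine ⟨l, hl, fun l' h' => ?_⟩
  rw [hl']
  exact Nat.le_findGreatest (hb l' h') ⟨l', h', rfl⟩

theorem sum_erase {α : Type*} (G : SimpleGraph α) [DecidableEq α] (S : Finset α) (v : α)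
    (hv : v ∈ S) :
    ∑ x ∈ S, degIn G S x = ∑ x ∈ S.erase v, degIn G (S.erase v) x + 2 * degIn G (S.erase v) v := by
  classical
  have key : ∀ x, degIn G S x = degIn G (S.erase v) x + if G.Adj x v then 1 else 0 := by
    intro x
    simp only [degIn, Finset.card_filter]
    rw [← Finset.sum_erase_add _ _ hv]
  rw [← Finset.sum_erase_add _ _ hv]
  simp_rw [key]
  rw [Finset.sum_add_distrib]
  have : ∑ x ∈ S.erase v, (if G.Adj x v then 1 else 0) = degIn G (S.erase v) v := by
    simp only [degIn, Finset.card_filter, G.adj_comm]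
  rw [this]
  simp
  omega

theorem degIn_le {α : Type*} (G : SimpleGraph α) (S : Finset α) (v : α) (L : List α)
    (h : ∀ w ∈ S, G.Adj v w → w ∈ L) : degIn G S v ≤ L.length := by
  classical
  refine le_trans (Finset.card_le_card (t := L.toFinset) ?_) (List.toFinset_card_le L)
  intro w hw
  rw [Finset.mem_filter] at hw
  simpa using h w hw.1 hw.2

theorem adj_of_degIn {α : Type*} (G : SimpleGraph α) (S : Finset α) (v a b c : α)
    (h : ∀ w ∈ S, G.Adj v w → w ∈ [a, b, c]) (hd : 3 ≤ degIn G S v) :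
    G.Adj v a ∧ G.Adj v b ∧ G.Adj v c := by
  refine ⟨?_, ?_, ?_⟩
  · by_contra hn
    have := degIn_le G S v [b, c] (fun w hw hvw => by
      have := h w hw hvw
      rcases List.mem_cons.1 this with rfl | h'
      · exact absurd hvw hn
      · exact h')
    simp at this; omega
  · by_contra hn
    have := degIn_le G S v [a, c] (fun w hw hvw => by
      have := h w hw hvw
      grind)
    simp at this; omega
  · by_contra hn
    have := degIn_le G S v [a, b] (fun w hw hvw => by
      have := h w hw hvw
      grind)
    simp at this; omega

theorem main_bound {α : Type*} (G : SimpleGraph α)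
    (h : ∀ m, 5 ≤ m → ¬ hasCycleLength G m) (n : ℕ) :
    ∀ S : Finset α, S.card = n → S.Nonempty → ∑ x ∈ S, degIn G S x + 4 ≤ 4 * S.card := by
  classical
  induction n using Nat.strong_induction_on with
  | _ n ih =>
  intro S hS hne
  by_cases h1 : S.card = 1
  · obtain ⟨a, rfl⟩ := Finset.card_eq_one.1 h1
    simp [degIn, Finset.filter_singleton]
  have hpos := hne.card_pos
  by_cases hlow : ∃ v ∈ S, degIn G S v ≤ 2
  · obtain ⟨v, hv, hd⟩ := hlow
    have hc := Finset.card_erase_of_mem hv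
    have := ih (S.erase v).card (by omega) _ rfl (Finset.card_pos.1 (by omega))
    have hm : degIn G (S.erase v) v ≤ degIn G S v :=
      Finset.card_le_card (Finset.filter_subset_filter _ (Finset.erase_subset _ _))
    rw [sum_erase G S v hv]
    omega
  push Not at hlow
  obtain ⟨l, hl, hmax⟩ := exists_longest G S
  obtain ⟨x, hx⟩ := hne
  have hl1 := hmax [x] (by simp [PathIn, hx])
  match l, hl, hmax, hl1 with
  | a :: l, hl, hmax, _ =>
  have ha : a ∈ S := hl.2.2 a (by simp)
  have hn0 := nbr_of_longest G h S a l hl hmax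
  have hd0 := hlow a ha
  have hlen := degIn_le G S a _ hn0
  rw [List.length_take] at hlen
  obtain ⟨b, c, d, r, rfl⟩ : ∃ b c d r, l = b :: c :: d :: r := by
    have h3 : 3 ≤ l.length := by omega
    match l, h3 with
    | b :: c :: d :: r, _ => exact ⟨b, c, d, r, rfl⟩
  have hb : b ∈ S := hl.2.2 b (by simp)
  have hc : c ∈ S := hl.2.2 c (by simp)
  have hd : d ∈ S := hl.2.2 d (by simp)
  obtain ⟨h_ab, h_ac, h_ad⟩ := adj_of_degIn G S a b c d (by simpa using hn0) hd0
  obtain ⟨p1, p2, p3⟩ := hl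
  have hn1 := nbr_of_longest G h S b (a :: c :: d :: r)
    ⟨by grind, by simp at p2 ⊢; exact ⟨h_ab.symm, h_ac, p2.2.2⟩, by grind⟩ (by simpa using hmax)
  have hn2 := nbr_of_longest G h S c (b :: a :: d :: r)
    ⟨by grind, by simp at p2 ⊢; exact ⟨p2.2.1.symm, h_ab.symm, h_ad, p2.2.2.2⟩, by grind⟩
    (by simpa using hmax)
  simp only [List.take] at hn0 hn1 hn2
  have hba : b ≠ a := h_ab.ne'
  have hca : c ≠ a := h_ac.ne'
  have hda : d ≠ a := h_ad.ne'
  have hcb : c ≠ b := by grind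
  have hdb : d ≠ b := by grind
  have hdc : d ≠ c := by grind
  have mb : b ∈ S.erase a := by simp [hba, hb]
  have mc : c ∈ (S.erase a).erase b := by simp [hca, hcb, hc]
  have md : d ∈ ((S.erase a).erase b).erase c := by simp [hda, hdb, hdc, hd]
  have q0 := degIn_le G (S.erase a) a [b, c, d] (fun w hw => hn0 w (by grind))
  have q1 := degIn_le G ((S.erase a).erase b) b [c, d] (fun w hw hv => by
    have := hn1 w (by grind) hv
    grind)
  have q2 := degIn_le G (((S.erase a).erase b).erase c) c [d] (fun w hw hv => by
    have := hn2 w (by grind) hv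
    grind)
  have c0 := Finset.card_erase_add_one ha
  have c1 := Finset.card_erase_add_one mb
  have c2 := Finset.card_erase_add_one mc
  have := ih _ (by omega) (((S.erase a).erase b).erase c) rfl ⟨d, md⟩
  rw [sum_erase G S a ha, sum_erase G _ b mb, sum_erase G _ c mc]
  simp only [List.length_cons, List.length_nil] at q0 q1 q2
  omega

theorem stmt_3 {α : Type*} [Fintype α] (G : SimpleGraph α)
    (h : ∀ m, 5 ≤ m → ¬ hasCycleLength G m) :
    G.edgeSet.ncard ≤ 2 * Fintype.card α - 2 := by
  classical
  have e : G.edgeSet.ncard = G.edgeFinset.card := by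
    rw [← coe_edgeFinset, Set.ncard_coe_finset]
  have hs : ∑ x ∈ Finset.univ, degIn G Finset.univ x = 2 * G.edgeFinset.card := by
    rw [← sum_degrees_eq_twice_card_edges]
    refine Finset.sum_congr rfl fun v _ => ?_
    rw [← card_neighborFinset_eq_degree, neighborFinset_eq_filter]
    unfold degIn
    congr
  rcases isEmpty_or_nonempty α with hα | hα
  · simp at hs
    simp [e, hs]
  · have := main_bound G h _ Finset.univ rfl Finset.univ_nonempty
    rw [hs, Finset.card_univ] at this
    omega
end

section
/- For every integer k ≥ 1 there exists a finite simple graph G on 3k + 1 vertices with exactly 6k = 2(3k+1) − 2 edges that contains no cycle of length at least 5. (Such a graph is obtained by taking k pairwise disjoint triangles and adding one additional vertex adjacent to every other vertex.) -/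
open SimpleGraph

/-- Hub `0` joined to the disjoint triangles `{3q+1, 3q+2, 3q+3}`. -/
def friendGraph (k : ℕ) : SimpleGraph (Fin (3 * k + 1)) where
  Adj u v := u ≠ v ∧ (u.val = 0 ∨ v.val = 0 ∨ (u.val - 1) / 3 = (v.val - 1) / 3)
  symm := ⟨fun u v h => ⟨h.1.symm, by have := h.2; omega⟩⟩
  loopless := ⟨fun u h => h.1 rfl⟩

lemma friendGraph_adj {k : ℕ} {u v : Fin (3 * k + 1)} : (friendGraph k).Adj u v ↔
    u.val ≠ v.val ∧ (u.val = 0 ∨ v.val = 0 ∨ (u.val - 1) / 3 = (v.val - 1) / 3) := by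
  rw [Fin.val_ne_iff]
  exact Iff.rfl

open Classical in
lemma friendGraph_degree_zero (k : ℕ) : (friendGraph k).degree 0 = 3 * k := by
  have h : (friendGraph k).neighborFinset 0 = Finset.univ.erase 0 := by
    ext u
    simp only [mem_neighborFinset, friendGraph_adj, Finset.mem_erase, Finset.mem_univ,
      Fin.val_zero, true_or, and_true]
    rw [ne_comm, ← Fin.val_ne_iff, Fin.val_zero]
  rw [← card_neighborFinset_eq_degree, h]
  simp

open Classical in
lemma friendGraph_degree_succ (k : ℕ) (j : Fin (3 * k)) :
    (friendGraph k).degree j.succ = 3 := by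
  have hj := j.isLt
  have h : ((friendGraph k).neighborFinset j.succ).map Fin.valEmbedding =
      ({0, 3 * (j.val / 3) + 1, 3 * (j.val / 3) + 2, 3 * (j.val / 3) + 3} : Finset ℕ).erase
        (j.val + 1) := by
    ext u
    simp only [Finset.mem_map, mem_neighborFinset, friendGraph_adj, Finset.mem_erase,
      Finset.mem_insert, Finset.mem_singleton, Fin.valEmbedding_apply, Fin.val_succ]
    constructor
    · rintro ⟨v, hv, rfl⟩
      omega
    · intro hu
      exact ⟨⟨u, by omega⟩, by simp only; omega, rfl⟩
  rw [← card_neighborFinset_eq_degree, ← Finset.card_map Fin.valEmbedding, h,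
    Finset.card_erase_of_mem]
  · rw [Finset.card_insert_of_notMem, Finset.card_insert_of_notMem,
      Finset.card_insert_of_notMem, Finset.card_singleton] <;> simp
  · simp only [Finset.mem_insert, Finset.mem_singleton]
    omega

lemma friendGraph_edges (k : ℕ) : (friendGraph k).edgeSet.ncard = 6 * k := by
  classical
  have h := (friendGraph k).sum_degrees_eq_twice_card_edges
  rw [Fin.sum_univ_succ, friendGraph_degree_zero] at h
  simp only [friendGraph_degree_succ, Finset.sum_const, Finset.card_univ, Fintype.card_fin,
    smul_eq_mul] at h
  rw [← coe_edgeFinset, Set.ncard_coe_finset]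
  omega

lemma friendGraph_aux {k : ℕ} {a : Fin (3 * k + 1)} (w : (friendGraph k).Walk a a)
    (hw : w.IsCycle) (hl : 5 ≤ w.length)
    (h0 : ∀ i, 1 ≤ i → i < w.length → (w.getVert i).val ≠ 0) : False := by
  have inj : ∀ i j, 1 ≤ i → i < j → j ≤ 4 → (w.getVert i).val ≠ (w.getVert j).val := by
    intro i j hi hij hj he
    have := hw.getVert_injOn (x₁ := i) (x₂ := j) (by simp; omega) (by simp; omega) (Fin.ext he)
    omega
  have a1 := friendGraph_adj.1 (w.adj_getVert_succ (i := 1) (by omega))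
  have a2 := friendGraph_adj.1 (w.adj_getVert_succ (i := 2) (by omega))
  have a3 := friendGraph_adj.1 (w.adj_getVert_succ (i := 3) (by omega))
  have z1 := h0 1 (by omega) (by omega)
  have z2 := h0 2 (by omega) (by omega)
  have z3 := h0 3 (by omega) (by omega)
  have z4 := h0 4 (by omega) (by omega)
  have i13 := inj 1 3 (by omega) (by omega) (by omega)
  have i14 := inj 1 4 (by omega) (by omega) (by omega)
  have i24 := inj 2 4 (by omega) (by omega) (by omega)
  simp only [Nat.reduceAdd] at a1 a2 a3
  omega

theorem stmt_4 (k : ℕ) (hk : 1 ≤ k) :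
    ∃ G : SimpleGraph (Fin (3 * k + 1)),
      G.edgeSet.ncard = 6 * k ∧ ∀ m, 5 ≤ m → ¬ hasCycleLength G m := by
  classical
  refine ⟨friendGraph k, friendGraph_edges k, ?_⟩
  rintro m hm ⟨a, w, hw, rfl⟩
  by_cases h : (0 : Fin (3 * k + 1)) ∈ w.support
  · have hc := hw.rotate h
    have hl : (w.rotate 0 h).length = w.length := by simp
    refine friendGraph_aux (w.rotate 0 h) hc (by omega) ?_
    intro i hi hil hz
    have := hc.getVert_injOn (x₁ := i) (x₂ := (w.rotate 0 h).length) (by simp; omega)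
      (by simp; omega) (by rw [Walk.getVert_length]; exact Fin.ext hz)
    omega
  · refine friendGraph_aux w hw hm ?_
    intro i hi hil hz
    apply h
    have : w.getVert i = 0 := Fin.ext hz
    rw [← this]
    exact w.getVert_mem_support i
end

section
/- Let G be a finite simple connected graph in which every vertex has degree at least 3 and which contains no cycle of length at least 5. Then there exist four vertices x, x₁, x₂, x₃ of G that are pairwise adjacent (so {x, x₁, x₂, x₃} induces a K₄ in G) and such that x, x₁ and x₂ each have degree exactly 3 in G. -/
open SimpleGraph

lemma nbr_of_longest_s5 {α : Type*} (G : SimpleGraph α)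
    (hnc : ∀ m, 5 ≤ m → ¬ hasCycleLength G m) {u v : α} (p : G.Walk u v) (hp : p.IsPath)
    (hmax : ∀ (a b : α) (q : G.Walk a b), q.IsPath → q.length ≤ p.length)
    (w : α) (hw : G.Adj u w) :
    w = p.getVert 1 ∨ w = p.getVert 2 ∨ w = p.getVert 3 := by
  classical
  by_cases hs : w ∈ p.support
  · have hq : (p.takeUntil w hs).IsPath := hp.takeUntil hs
    have hg : p.getVert (p.takeUntil w hs).length = w :=
      SimpleGraph.Walk.getVert_length_takeUntil hs
    have hne : (p.takeUntil w hs).length ≠ 0 := by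
      intro h
      exact hw.ne (SimpleGraph.Walk.eq_of_length_eq_zero h)
    have hlt : (p.takeUntil w hs).length < 4 := by
      by_contra hcon
      push Not at hcon
      refine hnc ((p.takeUntil w hs).length + 1) (by omega)
        ⟨w, SimpleGraph.Walk.cons hw.symm (p.takeUntil w hs), ?_, by simp⟩
      rw [SimpleGraph.Walk.cons_isCycle_iff]
      refine ⟨hq, fun he => ?_⟩
      have h1 := hq.length_eq_one_of_mem_edges (by rwa [Sym2.eq_swap] at he)
      omega
    generalize (p.takeUntil w hs).length = n at *
    have : n = 1 ∨ n = 2 ∨ n = 3 := by omega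
    rcases this with rfl | rfl | rfl <;> simp [hg]
  · have := hmax _ _ (SimpleGraph.Walk.cons hw.symm p) (hp.cons hs)
    simp at this

lemma deg_of_nbr {α : Type*} [Fintype α] (G : SimpleGraph α) [DecidableRel G.Adj]
    (hdeg : ∀ w, 3 ≤ G.degree w) (u a b c : α)
    (h : ∀ w, G.Adj u w → w = a ∨ w = b ∨ w = c) :
    G.Adj u a ∧ G.Adj u b ∧ G.Adj u c ∧ G.degree u = 3 ∧ a ≠ b ∧ a ≠ c ∧ b ≠ c := by
  classical
  have hsub : G.neighborFinset u ⊆ {a, b, c} := by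
    intro w hw
    simpa using h w (by simpa using hw)
  have h3 : ({a, b, c} : Finset α).card ≤ 3 := Finset.card_le_three
  have hd : 3 ≤ (G.neighborFinset u).card := hdeg u
  have heq := Finset.eq_of_subset_of_card_le hsub (h3.trans hd)
  have hc : ({a, b, c} : Finset α).card = 3 := by rw [heq] at hd; omega
  have hm : ∀ w ∈ ({a, b, c} : Finset α), G.Adj u w := by
    intro w hw
    rw [← heq] at hw
    simpa using hw
  refine ⟨hm a (by simp), hm b (by simp), hm c (by simp), ?_, ?_, ?_, ?_⟩
  · rw [← SimpleGraph.card_neighborFinset_eq_degree, heq, hc]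
  all_goals
    intro hab
    rw [hab] at hc
    have h1 := Finset.card_le_two (a := a) (b := b)
    have h2 := Finset.card_le_two (a := b) (b := c)
    have h3 := Finset.card_le_two (a := c) (b := b)
    have h4 := Finset.card_le_two (a := a) (b := c)
    simp at hc
    try omega

theorem stmt_5 {α : Type*} [Fintype α] (G : SimpleGraph α) [DecidableRel G.Adj]
    (hconn : G.Connected) (hdeg : ∀ w, 3 ≤ G.degree w)
    (hnc : ∀ m, 5 ≤ m → ¬ hasCycleLength G m) :
    ∃ x x₁ x₂ x₃ : α, G.Adj x x₁ ∧ G.Adj x x₂ ∧ G.Adj x x₃ ∧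
      G.Adj x₁ x₂ ∧ G.Adj x₁ x₃ ∧ G.Adj x₂ x₃ ∧
      G.degree x = 3 ∧ G.degree x₁ = 3 ∧ G.degree x₂ = 3 := by
  classical
  obtain ⟨z⟩ := hconn.nonempty
  obtain ⟨u, v, p, hp, hmax⟩ : ∃ (u v : α) (p : G.Walk u v), p.IsPath ∧
      ∀ (a b : α) (q : G.Walk a b), q.IsPath → q.length ≤ p.length := by
    let P : ℕ → Prop := fun n => ∃ (u v : α) (p : G.Walk u v), p.IsPath ∧ p.length = n
    have hP0 : P 0 := ⟨z, z, SimpleGraph.Walk.nil, by simp, by simp⟩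
    obtain ⟨u, v, p, hp, hl⟩ := Nat.findGreatest_spec (Nat.zero_le (Fintype.card α)) hP0
    refine ⟨u, v, p, hp, fun a b q hq => ?_⟩
    rw [hl]
    exact Nat.le_findGreatest hq.length_lt.le ⟨a, b, q, hq, rfl⟩
  have key := fun (a b : α) (q : G.Walk a b) (hq : q.IsPath) (hl : q.length = p.length) =>
    deg_of_nbr G hdeg a _ _ _ (nbr_of_longest_s5 G hnc q hq (by rw [hl]; exact hmax))
  have k0 := key _ _ p hp rfl
  cases p with
  | nil => simp at k0
  | @cons _ a _ h1 p =>
  cases p with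
  | nil => simp at k0
  | @cons _ b _ h2 p =>
  cases p with
  | nil => simp at k0
  | @cons _ c _ h3 p =>
  simp only [SimpleGraph.Walk.getVert_cons_succ, SimpleGraph.Walk.getVert_zero] at k0
  obtain ⟨ua, ub, uc, du, -⟩ := k0
  have k1 := key _ _ (.cons ua.symm (.cons ub (.cons h3 p)))
    (by simp [SimpleGraph.Walk.cons_isPath_iff] at hp ⊢; grind) (by simp)
  have k2 := key _ _ (.cons h2.symm (.cons ua.symm (.cons uc p)))
    (by simp [SimpleGraph.Walk.cons_isPath_iff] at hp ⊢; grind) (by simp)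
  simp only [SimpleGraph.Walk.getVert_cons_succ, SimpleGraph.Walk.getVert_zero] at k1 k2
  exact ⟨u, a, b, c, ua, ub, uc, h2, k1.2.2.1, h3, du, k1.2.2.2.1, k2.2.2.2.1⟩
end

section
/- Let G be a finite simple graph on n vertices that is 2-good, contains no odd cycle of length at least 5 (no cycle C_{2j+1} for any j ≥ 2), and is saturated with respect to odd cycles of length at least 5, meaning that for every pair of nonadjacent vertices x, y of G the graph obtained from G by adding the edge xy contains an odd cycle of length at least 5. Then e(G) ≥ (5/4)n − 3, i.e., 4·e(G) ≥ 5n − 12. -/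
open SimpleGraph

/-- Grow a small edge set `F` with the same reachability as a graph all of whose edges
lie in triangles. -/
lemma aux_forest {α : Type*} [Fintype α] (T : SimpleGraph α)
    (hT : ∀ u v, T.Adj u v → ∃ w, T.Adj u w ∧ T.Adj v w) (k : ℕ) :
    ∀ F S : Set (Sym2 α), S ⊆ T.edgeSet → 3 * F.ncard ≤ 2 * S.ncard →
    (∀ u v, s(u,v) ∈ S → (fromEdgeSet F).Reachable u v) → T.edgeSet.ncard ≤ S.ncard + k →
    ∃ F' : Set (Sym2 α), 3 * F'.ncard ≤ 2 * T.edgeSet.ncard ∧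
      ∀ u v, T.Adj u v → (fromEdgeSet F').Reachable u v := by
  induction k with
  | zero =>
    intro F S hS hc hr hk
    have : S = T.edgeSet := Set.eq_of_subset_of_ncard_le hS hk (Set.toFinite _)
    subst this
    exact ⟨F, hc, fun u v h => hr u v h⟩
  | succ k ih =>
    intro F S hS hc hr hk
    by_cases hall : ∀ u v, T.Adj u v → (fromEdgeSet F).Reachable u v
    · exact ⟨F, hc.trans (Nat.mul_le_mul_left 2 (Set.ncard_le_ncard hS (Set.toFinite _))), hall⟩
    push Not at hall
    have mono : ∀ {A C : Set (Sym2 α)}, A ⊆ C → ∀ {a b}, (fromEdgeSet A).Reachable a b →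
        (fromEdgeSet C).Reachable a b := fun h _ _ h' => h'.mono (fromEdgeSet_mono h)
    have edge : ∀ {C : Set (Sym2 α)} {a b}, a ≠ b → s(a,b) ∈ C →
        (fromEdgeSet C).Reachable a b :=
      fun hne h => Adj.reachable ((fromEdgeSet_adj _).2 ⟨h, hne⟩)
    have symm' : ∀ {C : Set (Sym2 α)} {a b c d}, s(a,b) = s(c,d) →
        (fromEdgeSet C).Reachable c d → (fromEdgeSet C).Reachable a b := by
      intro C a b c d h h'
      rcases Sym2.eq_iff.1 h with ⟨rfl, rfl⟩ | ⟨rfl, rfl⟩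
      · exact h'
      · exact h'.symm
    have step : ∀ u v w, T.Adj u v → T.Adj v w → T.Adj u w → (fromEdgeSet F).Reachable u w →
        ¬ (fromEdgeSet F).Reachable u v → ∃ F' : Set (Sym2 α),
          3 * F'.ncard ≤ 2 * T.edgeSet.ncard ∧
          ∀ u v, T.Adj u v → (fromEdgeSet F').Reachable u v := by
      intro u v w huv hvw huw' huw hn
      have hvwS : s(v,w) ∉ S := fun h => hn (huw.trans (hr _ _ h).symm)
      have huvS : s(u,v) ∉ insert s(v,w) S := by
        rintro (h | h)
        · have := huv.ne
          have := huw'.ne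
          grind
        · exact hn (hr _ _ h)
      have c1 := Set.ncard_insert_of_notMem hvwS (Set.toFinite _)
      have c2 := Set.ncard_insert_of_notMem huvS (Set.toFinite _)
      have c3 := Set.ncard_insert_le s(u,v) F
      refine ih (insert s(u,v) F) (insert s(u,v) (insert s(v,w) S)) ?_ (by omega) ?_ (by omega)
      · rintro e (rfl | rfl | h)
        · exact huv
        · exact hvw
        · exact hS h
      · have r1 : (fromEdgeSet (insert s(u,v) F)).Reachable u v :=
          edge huv.ne (Set.mem_insert _ _)
        rintro a b (h | h | h)
        · exact symm' h r1
        · exact symm' h (r1.symm.trans (mono (Set.subset_insert _ _) huw))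
        · exact mono (Set.subset_insert _ _) (hr _ _ h)
    obtain ⟨u, v, huv, hn⟩ := hall
    obtain ⟨w, huw, hvw⟩ := hT u v huv
    by_cases h1 : (fromEdgeSet F).Reachable u w
    · exact step u v w huv hvw huw h1 hn
    by_cases h2 : (fromEdgeSet F).Reachable v w
    · exact step v u w huv.symm huw hvw h2 (fun h => hn h.symm)
    have a1 : s(v,w) ∉ S := fun h => h2 (hr _ _ h)
    have a2 : s(u,w) ∉ insert s(v,w) S := by
      rintro (h | h)
      · have := huv.ne
        have := huw.ne
        grind
      · exact h1 (hr _ _ h)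
    have a3 : s(u,v) ∉ insert s(u,w) (insert s(v,w) S) := by
      rintro (h | h | h)
      · have := hvw.ne
        have := huv.ne
        grind
      · have := huw.ne
        have := huv.ne
        grind
      · exact hn (hr _ _ h)
    have c1 := Set.ncard_insert_of_notMem a1 (Set.toFinite _)
    have c2 := Set.ncard_insert_of_notMem a2 (Set.toFinite _)
    have c3 := Set.ncard_insert_of_notMem a3 (Set.toFinite _)
    have c4 := Set.ncard_insert_le s(u,w) F
    have c5 := Set.ncard_insert_le s(u,v) (insert s(u,w) F)
    refine ih (insert s(u,v) (insert s(u,w) F))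
      (insert s(u,v) (insert s(u,w) (insert s(v,w) S))) ?_ (by omega) ?_ (by omega)
    · rintro e (rfl | rfl | rfl | h)
      · exact huv
      · exact huw
      · exact hvw
      · exact hS h
    · have r1 : (fromEdgeSet (insert s(u,v) (insert s(u,w) F))).Reachable u v :=
        edge huv.ne (Set.mem_insert _ _)
      have r2 : (fromEdgeSet (insert s(u,v) (insert s(u,w) F))).Reachable u w :=
        edge huw.ne (Set.mem_insert_of_mem _ (Set.mem_insert _ _))
      rintro a b (h | h | h | h)
      · exact symm' h r1
      · exact symm' h r2
      · exact symm' h (r1.symm.trans r2)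
      · exact mono ((Set.subset_insert _ _).trans (Set.subset_insert _ _)) (hr _ _ h)

/-- A graph of maximum degree at most one has at most `n / 2` edges. -/
lemma aux_matching {α : Type*} [Fintype α] (M : SimpleGraph α)
    (hM : ∀ v, {z | M.Adj v z}.Subsingleton) : 2 * M.edgeSet.ncard ≤ Fintype.card α := by
  classical
  have h := M.sum_degrees_eq_twice_card_edges
  rw [← coe_edgeFinset M, Set.ncard_coe_finset, ← h]
  calc ∑ v, M.degree v ≤ ∑ _v : α, 1 := by
        refine Finset.sum_le_sum fun v _ => ?_
        rw [← card_neighborFinset_eq_degree, Finset.card_le_one]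
        intro a ha b hb
        exact hM v (by simpa using ha) (by simpa using hb)
    _ = Fintype.card α := by simp

/-- Saturation forces connectivity. -/
lemma aux_connected {α : Type*} (G : SimpleGraph α)
    (hnoodd : ∀ m, 5 ≤ m → Odd m → ¬ hasCycleLength G m)
    (hsat : ∀ x y : α, x ≠ y → ¬ G.Adj x y →
      ∃ m, 5 ≤ m ∧ Odd m ∧ hasCycleLength (addEdge G x y) m) : G.Preconnected := by
  intro x y
  by_contra hxy
  have hne : x ≠ y := by
    rintro rfl
    exact hxy (Reachable.refl _)
  obtain ⟨m, h5, hodd, a, w, hw, hl⟩ := hsat x y hne (fun h => hxy h.reachable)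
  have hle : (addEdge G x y).deleteEdges {s(x,y)} ≤ G := by
    intro u v h
    simp only [addEdge, deleteEdges_adj, sup_adj, fromEdgeSet_adj, Set.mem_singleton_iff] at h
    tauto
  have hb : (addEdge G x y).IsBridge s(x,y) := by
    rw [isBridge_iff]
    exact fun h => hxy (h.mono hle)
  have hnot := hb.notMem_edges_of_isCycle hw
  have hq : ∀ e ∈ w.edges, e ∈ G.edgeSet := by
    intro e he
    have h1 := w.edges_subset_edgeSet he
    apply edgeSet_mono hle
    rw [edgeSet_deleteEdges]
    exact ⟨h1, fun h => hnot (by rw [← Set.mem_singleton_iff.1 h]; exact he)⟩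
  exact hnoodd m h5 hodd ⟨a, w.transfer G hq, hw.transfer hq, by rw [Walk.length_transfer, hl]⟩

theorem stmt_6 {α : Type*} [Fintype α] (G : SimpleGraph α)
    (h2good : kGood G 2)
    (hnoodd : ∀ m, 5 ≤ m → Odd m → ¬ hasCycleLength G m)
    (hsat : ∀ x y : α, x ≠ y → ¬ G.Adj x y →
      ∃ m, 5 ≤ m ∧ Odd m ∧ hasCycleLength (addEdge G x y) m) :
    5 * Fintype.card α ≤ 4 * G.edgeSet.ncard + 12 := by
  obtain hemp | hne := isEmpty_or_nonempty α
  · simp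
  have hpre := aux_connected G hnoodd hsat
  obtain ⟨B, hBG, hB2, hgood⟩ := h2good
  set H := G.deleteEdges B with hH
  let T : SimpleGraph α :=
    { Adj := fun u v => H.Adj u v ∧ ∃ t, H.Adj u t ∧ H.Adj v t
      symm := ⟨fun u v ⟨h, t, h1, h2⟩ => ⟨h.symm, t, h2, h1⟩⟩
      loopless := ⟨fun u h => h.1.ne rfl⟩ }
  have hT : ∀ u v, T.Adj u v → ∃ w, T.Adj u w ∧ T.Adj v w := by
    rintro u v ⟨h, t, h1, h2⟩
    exact ⟨t, ⟨h1, v, h, h2.symm⟩, ⟨h2, u, h.symm, h1.symm⟩⟩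
  have hTH : T ≤ H := fun u v h => h.1
  let M := H \ T
  have hM : 2 * M.edgeSet.ncard ≤ Fintype.card α := by
    apply aux_matching
    intro v a ha b hb
    have key : ∀ z, M.Adj v z → H.Adj v z ∧ ¬ ∃ t, H.Adj v t ∧ H.Adj z t := by
      intro z hz
      have hz' : H.Adj v z ∧ ¬ T.Adj v z := hz
      exact ⟨hz'.1, fun h => hz'.2 ⟨hz'.1, h⟩⟩
    exact hgood v (key a ha) (key b hb)
  obtain ⟨F, hF, hFr⟩ := aux_forest T hT T.edgeSet.ncard ∅ ∅ (by simp) (by simp) (by simp) (by simp)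
  have hGe : G.edgeSet = T.edgeSet ∪ M.edgeSet ∪ B := by
    have h1 : M.edgeSet = H.edgeSet \ T.edgeSet := edgeSet_sdiff _ _
    have h2 : H.edgeSet = G.edgeSet \ B := edgeSet_deleteEdges _
    have h3 : T.edgeSet ⊆ H.edgeSet := edgeSet_mono hTH
    rw [h1, Set.union_sdiff_cancel h3, h2, Set.sdiff_union_of_subset hBG]
  have hcard : G.edgeSet.ncard = T.edgeSet.ncard + M.edgeSet.ncard + B.ncard := by
    have h1 : M.edgeSet = H.edgeSet \ T.edgeSet := edgeSet_sdiff _ _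
    have h2 : H.edgeSet = G.edgeSet \ B := edgeSet_deleteEdges _
    have h3 : T.edgeSet ⊆ H.edgeSet := edgeSet_mono hTH
    have e1 := Set.ncard_sdiff_add_ncard_of_subset h3 (Set.toFinite _)
    have e2 := Set.ncard_sdiff_add_ncard_of_subset hBG (Set.toFinite _)
    rw [← h1] at e1
    rw [← h2] at e2
    omega
  -- the sparse connected graph
  let K : SimpleGraph α := fromEdgeSet (F ∪ M.edgeSet ∪ B)
  have hadj : ∀ u v, G.Adj u v → K.Reachable u v := by
    intro u v h
    have h' : s(u,v) ∈ T.edgeSet ∪ M.edgeSet ∪ B := hGe ▸ (show s(u,v) ∈ G.edgeSet from h)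
    rcases h' with (h' | h') | h'
    · exact (hFr u v h').mono (fromEdgeSet_mono (fun e he => Or.inl (Or.inl he)))
    · exact Adj.reachable ((fromEdgeSet_adj _).2 ⟨Or.inl (Or.inr h'), h.ne⟩)
    · exact Adj.reachable ((fromEdgeSet_adj _).2 ⟨Or.inr h', h.ne⟩)
  have hK : K.Connected := by
    refine { preconnected := ?_, nonempty := hne }
    intro u v
    obtain ⟨p⟩ := hpre u v
    induction p with
    | nil => exact Reachable.refl _
    | cons h _ ih => exact (hadj _ _ h).trans ih
  have hn := hK.card_vert_le_card_edgeSet_add_one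
  rw [Nat.card_eq_fintype_card, Nat.card_coe_set_eq] at hn
  have hKe : K.edgeSet.ncard ≤ F.ncard + M.edgeSet.ncard + B.ncard := by
    have h0 : K.edgeSet ⊆ F ∪ M.edgeSet ∪ B := by
      rw [edgeSet_fromEdgeSet]
      exact Set.sdiff_subset
    have h1 := Set.ncard_le_ncard h0 (Set.toFinite _)
    have h2 := Set.ncard_union_le (F ∪ M.edgeSet) B
    have h3 := Set.ncard_union_le F M.edgeSet
    omega
  omega
end

section
/- Let G be a finite simple graph that is 2-good and contains no odd cycle of length at least 5 (no cycle C_{2j+1} for any j ≥ 2). Suppose v₁x and v₂x are edges of G with v₁ ≠ v₂ such that neither v₁x nor v₂x is contained in a triangle of G, and suppose v₁v₂ is not an edge of G. Then the graph obtained from G by adding the edge v₁v₂ contains no odd cycle of length at least 5. -/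
open SimpleGraph

namespace Aux

variable {α : Type*} {G : SimpleGraph α}

/-- No even path of length at least four has adjacent ends. -/
def NoOdd (G : SimpleGraph α) : Prop :=
  ∀ (a b : α) (p : G.Walk a b), p.IsPath → Even p.length → 4 ≤ p.length → ¬ G.Adj a b

/-- The edge (or pair) lies in no triangle. -/
def NT (G : SimpleGraph α) (a b : α) : Prop := ∀ t, G.Adj a t → G.Adj b t → False

lemma NT.symm {a b : α} (h : NT G a b) : NT G b a := fun t h1 h2 => h t h2 h1

lemma noOdd_of (hnoodd : ∀ m, 5 ≤ m → Odd m → ¬ hasCycleLength G m) : NoOdd G := by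
  intro a b p hp he hl hab
  refine hnoodd (p.length + 1) (by omega) he.add_one ⟨b, Walk.cons hab.symm p, ?_, by simp⟩
  rw [Walk.cons_isCycle_iff]
  refine ⟨hp, fun hmem => ?_⟩
  cases p with
  | nil => simp at hl
  | cons h q =>
    rw [Walk.cons_isPath_iff] at hp
    rw [Walk.edges_cons, List.mem_cons] at hmem
    rcases hmem with hmem | hmem
    · rw [Sym2.eq_swap, Sym2.congr_right] at hmem
      subst hmem
      have := hp.1
      cases q with
      | nil => simp at hl
      | cons h' q' =>
        rw [Walk.cons_isPath_iff] at this
        exact this.2 (Walk.end_mem_support _)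
    · exact hp.2 (Walk.snd_mem_support_of_mem_edges _ hmem)

lemma five (H : NoOdd G) {a b c d e : α} (hab : G.Adj a b) (hbc : G.Adj b c) (hcd : G.Adj c d)
    (hde : G.Adj d e) (hea : G.Adj e a) (hac : a ≠ c) (had : a ≠ d) (hbd : b ≠ d) (hbe : b ≠ e)
    (hce : c ≠ e) : False := by
  refine H a e (.cons hab (.cons hbc (.cons hcd (.cons hde .nil)))) ?_ ?_ ?_ hea.symm
  · simp [Walk.cons_isPath_iff, hab.ne, hbc.ne, hcd.ne, hde.ne, hea.ne', *]
  · simp; decide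
  · simp

lemma nt_half (H : NoOdd G) {a b t : α} (p : G.Walk a t) (q : G.Walk t b) (hp : p.IsPath)
    (hq : q.IsPath) (ha : a ∉ q.support) (hab : G.Adj a b) (hat : G.Adj a t)
    (hl : 5 ≤ p.length + q.length) (he : Even p.length) (ho : Odd q.length) : False := by
  by_cases h4 : 4 ≤ p.length
  · exact H _ _ p hp he h4 hat
  · refine H a b (Walk.cons hat q) ?_ ?_ ?_ hab
    · exact hq.cons ha
    · simpa using ho.add_one
    · obtain ⟨k, hk⟩ := he
      obtain ⟨l, hl'⟩ := ho
      simp only [Walk.length_cons]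
      omega

lemma nt_close (H : NoOdd G) {a b : α} (p : G.Walk a b) (hp : p.IsPath) (hl : 5 ≤ p.length)
    (ho : Odd p.length) (hab : G.Adj a b) : NT G a b := by
  classical
  intro t hat hbt
  by_cases ht : t ∈ p.support
  · have hlen : (p.takeUntil t ht).length + (p.dropUntil t ht).length = p.length := by
      rw [← Walk.length_append, Walk.take_spec]
    have h1 := hp.takeUntil ht
    have h2 := hp.dropUntil ht
    have hd : ∀ z, z ∈ (p.takeUntil t ht).support → z ∈ (p.dropUntil t ht).support → z = t := by
      intro z hz1 hz2
      rw [← Walk.take_spec p ht] at hp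
      by_contra hzt
      have := hp.support_nodup
      rw [Walk.support_append, List.nodup_append'] at this
      rw [Walk.mem_support_iff] at hz2
      exact this.2.2 hz1 (hz2.resolve_left hzt)
    rw [← hlen] at ho hl
    rcases Nat.even_or_odd (p.takeUntil t ht).length with he | he
    · refine nt_half H _ _ h1 h2 (fun h => ?_) hab hat hl he ?_
      · exact hat.ne (hd _ (Walk.start_mem_support _) h)
      · exact (Nat.odd_add'.1 ho).2 he
    · refine nt_half H (p.dropUntil t ht).reverse (p.takeUntil t ht).reverse h2.reverse h1.reverse
        (fun h => ?_) hab.symm hbt (by simp only [Walk.length_reverse]; omega) ?_ (by simpa using he)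
      · rw [Walk.support_reverse, List.mem_reverse] at h
        exact hbt.ne (hd _ h (Walk.end_mem_support _))
      · rw [Walk.length_reverse]
        exact (Nat.odd_add.1 ho).1 he
  · refine H t b (Walk.cons hat.symm p) (hp.cons ht) ?_ ?_ hbt.symm
    · simpa using ho.add_one
    · simp only [Walk.length_cons]; omega

lemma cover {B : Set (Sym2 α)} (hB : ∀ w, goodVertex (G.deleteEdges B) w) {w y z : α}
    (hy : G.Adj w y) (hz : G.Adj w z) (hyz : y ≠ z) (ny : NT G w y) (nz : NT G w z) :
    s(w, y) ∈ B ∨ s(w, z) ∈ B := by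
  by_contra hcon
  push Not at hcon
  apply hyz
  apply hB w
  · refine ⟨by simp [deleteEdges_adj, hy, hcon], ?_⟩
    rintro ⟨t, h1, h2⟩
    exact ny t (deleteEdges_adj.1 h1).1 (deleteEdges_adj.1 h2).1
  · refine ⟨by simp [deleteEdges_adj, hz, hcon], ?_⟩
    rintro ⟨t, h1, h2⟩
    exact nz t (deleteEdges_adj.1 h1).1 (deleteEdges_adj.1 h2).1

lemma three [Finite α] {B : Set (Sym2 α)} (hc : B.ncard ≤ 2) {e f g : Sym2 α} (he : e ∈ B)
    (hf : f ∈ B) (hg : g ∈ B) (h1 : e ≠ f) (h2 : e ≠ g) (h3 : f ≠ g) : False := by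
  have : 2 < B.ncard := (Set.two_lt_ncard_iff (Set.toFinite B)).2 ⟨e, f, g, he, hf, hg, h1, h2, h3⟩
  omega

/-- Rotation of a path closed by an edge. -/
lemma rot {a b c : α} {h : G.Adj a c} {p : G.Walk c b} (hp : (Walk.cons h p).IsPath)
    (hba : G.Adj b a) : (p.concat hba).IsPath := by
  rw [Walk.cons_isPath_iff] at hp
  exact hp.1.concat hp.2 hba

lemma long [Finite α] (H : NoOdd G) {B : Set (Sym2 α)} (hc : B.ncard ≤ 2)
    (hB : ∀ w, goodVertex (G.deleteEdges B) w) {a b : α} (p : G.Walk a b) (hp : p.IsPath)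
    (hl : 5 ≤ p.length) (ho : Odd p.length) (hab : G.Adj a b) : False := by
  have n0 := nt_close H p hp hl ho hab
  match p, hp, hl, ho, n0 with
  | .cons (v := c1) e0 (.cons (v := c2) e1 (.cons (v := c3) e2 (.cons (v := c4) e3
      (.cons (v := c5) e4 r)))), hp, hl, ho, n0 =>
    have p1 := rot hp hab.symm
    have n1 := nt_close H _ p1 (by simpa using hl) (by simpa using ho) e0.symm
    have p2 := rot (by simpa only [Walk.concat_cons] using p1) e0
    have n2 := nt_close H _ p2 (by simpa using hl) (by simpa using ho) e1.symm
    have p3 := rot (by simpa only [Walk.concat_cons] using p2) e1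
    have n3 := nt_close H _ p3 (by simpa using hl) (by simpa using ho) e2.symm
    have p4 := rot (by simpa only [Walk.concat_cons] using p3) e2
    have n4 := nt_close H _ p4 (by simpa using hl) (by simpa using ho) e3.symm
    have p5 := rot (by simpa only [Walk.concat_cons] using p4) e3
    have n5 := nt_close H _ p5 (by simpa using hl) (by simpa using ho) e4.symm
    have hb := Walk.end_mem_support r
    have hc5 := Walk.start_mem_support r
    simp only [Walk.cons_isPath_iff, Walk.support_cons, List.mem_cons, not_or] at hp
    obtain ⟨⟨⟨⟨⟨hr, h4⟩, h3⟩, h2⟩, h1⟩, h0⟩ := hp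
    have hne : ∀ {z w : α}, z ∉ r.support → w ∈ r.support → z ≠ w := by
      rintro z w h h' rfl; exact h h'
    have q0 := cover hB hab e0 (by grind) n0 n1.symm
    have q2 := cover hB e1.symm e2 (by grind) n2 n3.symm
    have q4 := cover hB e3.symm e4 (by grind) n4 n5.symm
    rcases q0 with q0 | q0 <;> rcases q2 with q2 | q2 <;> rcases q4 with q4 | q4 <;>
      refine three hc q0 q2 q4 ?_ ?_ ?_ <;> simp only [ne_eq, Sym2.eq_iff] <;> grind

lemma short [Finite α] (H : NoOdd G) {B : Set (Sym2 α)} (hc : B.ncard ≤ 2)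
    (hB : ∀ w, goodVertex (G.deleteEdges B) w) {v x y : α} (p : G.Walk v x) (hp : p.IsPath)
    (hl : p.length = 3) (hy : y ∉ p.support) (hvx : G.Adj v x) (hyx : G.Adj y x)
    (nv : NT G v x) (ny : NT G y x) : False := by
  match p, hp, hl, hy with
  | .cons (v := a) e0 (.cons (v := b) e1 (.cons e2 .nil)), hp, hl, hy =>
    simp only [Walk.cons_isPath_iff, Walk.support_cons, Walk.support_nil, List.mem_cons, not_or,
      List.not_mem_nil, not_false_eq_true, and_true] at hp hy
    have nva : NT G v a := by
      intro t h1 h2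
      by_cases hb : t = b
      · subst hb; exact nv _ h1 e2.symm
      by_cases hx : t = x
      · subst hx; exact nv _ e0 h2.symm
      exact five H h1.symm hvx e2.symm e1.symm h2 hx hb (by tauto) e0.ne (by tauto)
    have nab : NT G a b := by
      intro t h1 h2
      by_cases hb : t = v
      · subst hb; exact nv _ h2.symm e2.symm
      by_cases hx : t = x
      · subst hx; exact nv _ e0 h1.symm
      exact five H h1.symm e0.symm hvx e2.symm h2 hb hx (by tauto) e1.ne (by tauto)
    have nbx : NT G b x := by
      intro t h1 h2
      by_cases hb : t = v
      · subst hb; exact nv _ h1.symm e2.symm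
      by_cases hx : t = a
      · subst hx; exact nv _ e0 h2
      exact five H h1.symm e1.symm e0.symm hvx h2 hx hb (by tauto) e2.ne (by tauto)
    have q1 := cover hB hvx.symm hyx.symm (by grind) nv.symm ny.symm
    have q2 := cover hB hvx.symm e2.symm (by grind) nv.symm nbx.symm
    have q3 := cover hB hyx.symm e2.symm (by grind) ny.symm nbx.symm
    have q4 := cover hB e0.symm e1 (by grind) nva.symm nab
    have hbig : ∀ z w u, s(x, z) ∈ B → s(x, w) ∈ B → s(a, u) ∈ B → z ≠ w → x ≠ u → False := by
      intro z w u h1 h2 h3 h4 h5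
      refine three hc h1 h2 h3 ?_ ?_ ?_ <;> simp only [ne_eq, Sym2.eq_iff] <;> grind
    grind

lemma even_split (H : NoOdd G) {v x : α} (p : G.Walk v x) (hp : p.IsPath) (hvx : G.Adj v x)
    (nv : NT G v x) : Odd p.length := by
  by_contra hno
  rw [Nat.not_odd_iff_even] at hno
  by_cases h4 : 4 ≤ p.length
  · exact H _ _ p hp hno h4 hvx
  · match p, hno, h4 with
    | .nil, _, _ => exact hvx.ne rfl
    | .cons e0 .nil, h, _ => simp at h
    | .cons e0 (.cons e1 .nil), h, _ => exact nv _ e0 e1.symm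
    | .cons e0 (.cons e1 (.cons e2 .nil)), h, _ => simp at h; revert h; decide
    | .cons e0 (.cons e1 (.cons e2 (.cons e3 r))), _, h => simp at h

lemma main [Finite α] (H : NoOdd G) {B : Set (Sym2 α)} (hc : B.ncard ≤ 2)
    (hB : ∀ w, goodVertex (G.deleteEdges B) w) {v₁ v₂ x : α} (hne : v₁ ≠ v₂)
    (h1 : G.Adj v₁ x) (h2 : G.Adj v₂ x) (n1 : NT G v₁ x) (n2 : NT G v₂ x)
    (p : G.Walk v₁ v₂) (hp : p.IsPath) (he : Even p.length) (hl : 4 ≤ p.length) : False := by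
  classical
  by_cases hx : x ∈ p.support
  · have hlen : (p.takeUntil x hx).length + (p.dropUntil x hx).length = p.length := by
      rw [← Walk.length_append, Walk.take_spec]
    have hp1 := hp.takeUntil hx
    have hp2 := (hp.dropUntil hx).reverse
    have hd : ∀ z, z ∈ (p.takeUntil x hx).support → z ∈ (p.dropUntil x hx).support → z = x := by
      intro z hz1 hz2
      rw [← Walk.take_spec p hx] at hp
      by_contra hzt
      have := hp.support_nodup
      rw [Walk.support_append, List.nodup_append'] at this
      rw [Walk.mem_support_iff] at hz2
      exact this.2.2 hz1 (hz2.resolve_left hzt)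
    have o1 := even_split H _ hp1 h1 n1
    have o2 := even_split H _ hp2 h2 n2
    by_cases l1 : 5 ≤ (p.takeUntil x hx).length
    · exact long H hc hB _ hp1 l1 o1 h1
    by_cases l2 : 5 ≤ (p.dropUntil x hx).reverse.length
    · exact long H hc hB _ hp2 l2 o2 h2
    by_cases l3 : (p.takeUntil x hx).length = 3
    · exact short H hc hB _ hp1 l3 (fun h => h2.ne (hd _ h (Walk.end_mem_support _))) h1 h2 n1 n2
    · refine short H hc hB _ hp2 ?_ (fun h => ?_) h2 h1 n2 n1
      · obtain ⟨k, hk⟩ := o1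
        obtain ⟨l, hl'⟩ := o2
        rw [Walk.length_reverse] at *
        omega
      · rw [Walk.support_reverse, List.mem_reverse] at h
        exact h1.ne (hd _ (Walk.start_mem_support _) h)
  · refine long H hc hB (Walk.cons h1.symm p) (hp.cons hx) ?_ ?_ h2.symm
    · simp only [Walk.length_cons]; omega
    · simpa using he.add_one

lemma adj_of {v₁ v₂ a b : α} (h : (addEdge G v₁ v₂).Adj a b) (hn : s(a, b) ≠ s(v₁, v₂)) :
    G.Adj a b := by
  simp only [addEdge, sup_adj, fromEdgeSet_adj, Set.mem_singleton_iff] at h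
  tauto

lemma edges_of {v₁ v₂ a b : α} (w : (addEdge G v₁ v₂).Walk a b) (hn : s(v₁, v₂) ∉ w.edges) :
    ∀ e ∈ w.edges, e ∈ G.edgeSet := by
  intro e he
  induction e with
  | _ a b =>
    exact adj_of (Walk.adj_of_mem_edges _ he) (fun h => hn (h ▸ he))

lemma exists_path {K : SimpleGraph α} {v₁ v₂ : α} (hne : v₁ ≠ v₂) (w : K.Walk v₁ v₁)
    (hw : w.IsCycle) (he : s(v₁, v₂) ∈ w.edges) :
    ∃ p : K.Walk v₁ v₂, p.IsPath ∧ p.length + 1 = w.length ∧ s(v₁, v₂) ∉ p.edges := by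
  cases w with
  | nil => simp at he
  | @cons _ u _ h p =>
    rw [Walk.cons_isCycle_iff] at hw
    by_cases hu : u = v₂
    · subst hu
      exact ⟨p.reverse, hw.1.reverse, by simp, by simpa using hw.2⟩
    · have hmem : s(v₁, v₂) ∈ p.reverse.edges := by
        rw [Walk.edges_cons, List.mem_cons, Sym2.congr_right] at he
        simpa using he.resolve_left (Ne.symm hu)
      have hp := hw.1.reverse
      have hlen : p.reverse.length = p.length := by simp
      generalize p.reverse = q at hmem hp hlen
      cases q with
      | nil => simp at hmem
      | @cons _ z _ h' q =>
        rw [Walk.cons_isPath_iff] at hp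
        have hq : ∀ y, s(v₁, y) ∉ q.edges :=
          fun y hy => hp.2 (Walk.fst_mem_support_of_mem_edges _ hy)
        rw [Walk.edges_cons, List.mem_cons, Sym2.congr_right] at hmem
        have hz := hmem.resolve_right (hq _)
        subst hz
        refine ⟨Walk.cons h q.reverse, hp.1.reverse.cons (by simpa using hp.2), ?_, ?_⟩
        · simp at hlen ⊢; omega
        · rw [Walk.edges_cons, List.mem_cons, Sym2.congr_right]
          simpa [Ne.symm hu] using hq _

end Aux

theorem stmt_7 {α : Type*} [Fintype α] (G : SimpleGraph α)
    (h2good : kGood G 2)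
    (hnoodd : ∀ m, 5 ≤ m → Odd m → ¬ hasCycleLength G m)
    (v₁ v₂ x : α) (hne : v₁ ≠ v₂)
    (h1 : G.Adj v₁ x) (h2 : G.Adj v₂ x)
    (ht1 : ¬ ∃ t, G.Adj v₁ t ∧ G.Adj x t)
    (ht2 : ¬ ∃ t, G.Adj v₂ t ∧ G.Adj x t)
    (hnadj : ¬ G.Adj v₁ v₂) :
    ∀ m, 5 ≤ m → Odd m → ¬ hasCycleLength (addEdge G v₁ v₂) m := by
  classical
  rintro m hm ho ⟨a, w, hw, hlen⟩
  by_cases he : s(v₁, v₂) ∈ w.edges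
  · have hv := Walk.fst_mem_support_of_mem_edges _ he
    obtain ⟨p, hp, hpl, hpe⟩ := Aux.exists_path hne (w.rotate v₁ hv) (hw.rotate hv)
      ((w.rotate_edges v₁ hv).mem_iff.2 he)
    have hpl' : p.length + 1 = m := by rw [hpl, Walk.length_rotate, hlen]
    obtain ⟨B, -, hc, hB⟩ := h2good
    have ed := Aux.edges_of p hpe
    refine Aux.main (Aux.noOdd_of hnoodd) hc hB hne h1 h2 (fun t a b => ht1 ⟨t, a, b⟩)
      (fun t a b => ht2 ⟨t, a, b⟩) (p.transfer G ed) (hp.transfer ed) ?_ ?_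
    · rw [Walk.length_transfer]
      obtain ⟨k, hk⟩ := ho
      exact ⟨k, by omega⟩
    · rw [Walk.length_transfer]; omega
  · have ed := Aux.edges_of w he
    exact hnoodd m hm ho ⟨a, w.transfer G ed, hw.transfer ed, by simpa using hlen⟩
end

section
/- For every integer k ≥ 1 there exists a finite simple graph G on 2k + 2 vertices with exactly 3k + 1 edges such that G is 0-good and contains no odd cycle of length at least 5. (Such a graph has vertex set {u, v, x₁, …, x_k, y₁, …, y_k} and edge set consisting of uv and the edges x_iu, x_iv, x_iy_i for all 1 ≤ i ≤ k.) -/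
open SimpleGraph

/-- Oriented edge relation: `u = 0`, `v = 1`, `x_i = 2 + 2 i`, `y_i = 3 + 2 i`. -/
def bookRel (a b : ℕ) : Prop :=
  (a = 0 ∧ b = 1) ∨ (a ≤ 1 ∧ 2 ≤ b ∧ b % 2 = 0) ∨ (2 ≤ a ∧ a % 2 = 0 ∧ b = a + 1)

/-- The book graph with pendant edges. -/
def bookGraph (k : ℕ) : SimpleGraph (Fin (2 * k + 2)) where
  Adj a b := bookRel a.1 b.1 ∨ bookRel b.1 a.1
  symm := ⟨fun _ _ h => h.symm⟩
  loopless := ⟨fun a h => by unfold bookRel at h; omega⟩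

/-- Enumeration of the edges. -/
def bookEdge (k : ℕ) : Option (Fin k × Fin 3) → Sym2 (Fin (2 * k + 2))
  | none => s(⟨0, by omega⟩, ⟨1, by omega⟩)
  | some (i, 0) => s(⟨0, by omega⟩, ⟨2 + 2 * i.1, by omega⟩)
  | some (i, 1) => s(⟨1, by omega⟩, ⟨2 + 2 * i.1, by omega⟩)
  | some (i, 2) => s(⟨2 + 2 * i.1, by omega⟩, ⟨3 + 2 * i.1, by omega⟩)

lemma bookEdge_injective (k : ℕ) : Function.Injective (bookEdge k) := by
  rintro (_ | ⟨i, a⟩) (_ | ⟨j, b⟩) h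
  · rfl
  · exfalso
    fin_cases b <;> simp [bookEdge, Fin.ext_iff] at h <;> omega
  · exfalso
    fin_cases a <;> simp [bookEdge, Fin.ext_iff] at h <;> omega
  · fin_cases a <;> fin_cases b <;> simp [bookEdge, Fin.ext_iff] at h ⊢ <;> omega

lemma bookEdge_range (k : ℕ) : Set.range (bookEdge k) = (bookGraph k).edgeSet := by
  have key : ∀ a b : Fin (2 * k + 2), bookRel a.1 b.1 → s(a, b) ∈ Set.range (bookEdge k) := by
    rintro ⟨a, ha⟩ ⟨b, hb⟩ h
    simp only [bookRel] at h
    rcases h with ⟨rfl, rfl⟩ | ⟨h1, h2, h3⟩ | ⟨h1, h2, rfl⟩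
    · exact ⟨none, rfl⟩
    · obtain ⟨i, rfl⟩ : ∃ i, b = 2 + 2 * i := ⟨(b - 2) / 2, by omega⟩
      obtain rfl | rfl : a = 0 ∨ a = 1 := by omega
      · exact ⟨some (⟨i, by omega⟩, 0), rfl⟩
      · exact ⟨some (⟨i, by omega⟩, 1), rfl⟩
    · obtain ⟨i, rfl⟩ : ∃ i, a = 2 + 2 * i := ⟨(a - 2) / 2, by omega⟩
      refine ⟨some (⟨i, by omega⟩, 2), ?_⟩
      simp [bookEdge, Fin.ext_iff]
      omega
  ext e
  constructor
  · rintro ⟨_ | ⟨i, a⟩, rfl⟩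
    · simp [bookEdge, bookGraph, bookRel]
    · fin_cases a <;> simp [bookEdge, bookGraph, bookRel] <;> omega
  · induction e with
    | _ a b =>
      rintro (h | h)
      · exact key a b h
      · rw [Sym2.eq_swap]; exact key b a h

lemma bookGraph_good (k : ℕ) (hk : 1 ≤ k) (w : Fin (2 * k + 2)) :
    goodVertex (bookGraph k) w := by
  have tri : ∀ z, (bookGraph k).Adj w z →
      (¬ ∃ t, (bookGraph k).Adj w t ∧ (bookGraph k).Adj z t) →
      (2 ≤ w.1 ∧ 2 ≤ z.1) := by
    intro z hz hn
    by_contra hc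
    apply hn
    obtain ⟨w, hw⟩ := w
    obtain ⟨z, hz'⟩ := z
    simp only [bookGraph, bookRel] at hz hc
    by_cases h1 : w ≤ 1 ∧ z ≤ 1
    · refine ⟨⟨2, by omega⟩, ?_, ?_⟩
      · change bookRel w 2 ∨ bookRel 2 w
        unfold bookRel; omega
      · change bookRel z 2 ∨ bookRel 2 z
        unfold bookRel; omega
    · by_cases h2 : w = 0 ∨ z = 0
      · refine ⟨⟨1, by omega⟩, ?_, ?_⟩
        · change bookRel w 1 ∨ bookRel 1 w
          unfold bookRel; omega
        · change bookRel z 1 ∨ bookRel 1 z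
          unfold bookRel; omega
      · refine ⟨⟨0, by omega⟩, ?_, ?_⟩
        · change bookRel w 0 ∨ bookRel 0 w
          unfold bookRel; omega
        · change bookRel z 0 ∨ bookRel 0 z
          unfold bookRel; omega
  rintro z ⟨hz, hz'⟩ t ⟨ht, ht'⟩
  have h1 := tri z hz hz'
  have h2 := tri t ht ht'
  simp only [bookGraph, bookRel] at hz ht
  apply Fin.ext
  omega

lemma book_seq (m : ℕ) (hm : 5 ≤ m) (c : ℕ → ℕ)
    (adj : ∀ i, i < m → (bookRel (c i) (c (i + 1)) ∨ bookRel (c (i + 1)) (c i)))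
    (inj : ∀ i j, 1 ≤ i → i ≤ m → 1 ≤ j → j ≤ m → c i = c j → i = j)
    (h0 : c 0 = c m) : False := by
  -- every vertex on the cycle has two distinct neighbours
  have noy : ∀ i, 1 ≤ i → i ≤ m → (c i ≤ 1 ∨ c i % 2 = 0) := by
    intro i h1 h2
    by_contra hcon
    obtain ⟨p, q, hp1, hp2, hq1, hq2, hpq, hp, hq⟩ : ∃ p q, 1 ≤ p ∧ p ≤ m ∧ 1 ≤ q ∧ q ≤ m ∧
        p ≠ q ∧ (bookRel (c p) (c i) ∨ bookRel (c i) (c p)) ∧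
        (bookRel (c q) (c i) ∨ bookRel (c i) (c q)) := by
      by_cases hi : i = 1
      · subst hi
        have := adj 0 (by omega)
        rw [h0] at this
        exact ⟨m, 2, by omega, by omega, by omega, by omega, by omega, this,
          (adj 1 (by omega)).symm⟩
      · have e1 := adj (i - 1) (by omega)
        rw [show i - 1 + 1 = i by omega] at e1
        by_cases hi' : i = m
        · subst hi'
          have := adj 0 (by omega)
          rw [h0] at this
          exact ⟨i - 1, 1, by omega, by omega, by omega, by omega, by omega, e1, this.symm⟩
        · exact ⟨i - 1, i + 1, by omega, by omega, by omega, by omega, by omega, e1,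
            (adj i (by omega)).symm⟩
    apply hpq
    apply inj p q hp1 hp2 hq1 hq2
    simp only [bookRel] at hp hq
    omega
  have cover : ∀ i, 1 ≤ i → i < m → (c i ≤ 1 ∨ c (i + 1) ≤ 1) := by
    intro i h1 h2
    have e := adj i h2
    have n1 := noy i h1 h2.le
    have n2 := noy (i + 1) (by omega) h2
    simp only [bookRel] at e
    omega
  have cover0 : c m ≤ 1 ∨ c 1 ≤ 1 := by
    have e := adj 0 (by omega)
    have n1 := noy m (by omega) le_rfl
    have n2 := noy 1 (by omega) (by omega)
    rw [h0] at e
    simp only [bookRel, zero_add] at e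
    omega
  have three : ∀ i j l, 1 ≤ i → i < j → j < l → l ≤ m → c i ≤ 1 → c j ≤ 1 → c l ≤ 1 → False := by
    intro i j l h1 h2 h3 h4 a1 a2 a3
    have := inj i j (by omega) (by omega) (by omega) (by omega)
    have := inj i l (by omega) (by omega) (by omega) (by omega)
    have := inj j l (by omega) (by omega) (by omega) (by omega)
    omega
  have c1 := cover 1 (by omega) (by omega)
  have c2 := cover 2 (by omega) (by omega)
  have c3 := cover 3 (by omega) (by omega)
  have c4 := cover 4 (by omega) (by omega)
  have t1 := three 1 2 3 (by omega) (by omega) (by omega) (by omega)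
  have t2 := three 1 2 4 (by omega) (by omega) (by omega) (by omega)
  have t3 := three 1 3 4 (by omega) (by omega) (by omega) (by omega)
  have t4 := three 2 3 4 (by omega) (by omega) (by omega) (by omega)
  have t5 := three 1 3 5 (by omega) (by omega) (by omega) (by omega)
  have t6 := three 2 3 5 (by omega) (by omega) (by omega) (by omega)
  have t7 := three 2 4 m (by omega) (by omega) (by omega) (by omega)
  norm_num only at c1 c2 c3 c4
  clear adj inj noy cover three
  rcases cover0 with d0 | d0 <;> rcases c1 with d1 | d1 <;> rcases c2 with d2 | d2 <;>
    rcases c3 with d3 | d3 <;> rcases c4 with d4 | d4 <;>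
    first
    | exact t1 ‹_› ‹_› ‹_›
    | exact t2 ‹_› ‹_› ‹_›
    | exact t3 ‹_› ‹_› ‹_›
    | exact t4 ‹_› ‹_› ‹_›
    | exact t5 ‹_› ‹_› ‹_›
    | exact t6 ‹_› ‹_› ‹_›
    | exact t7 ‹_› ‹_› ‹_›

lemma bookGraph_no_cycle (k m : ℕ) (hm : 5 ≤ m) : ¬ hasCycleLength (bookGraph k) m := by
  rintro ⟨a, w, hw, rfl⟩
  refine book_seq w.length hm (fun i => (w.getVert i).1) (fun i hi => w.adj_getVert_succ hi) ?_
    (by simp)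
  exact fun i j h1 h2 h3 h4 h => hw.getVert_injOn ⟨h1, h2⟩ ⟨h3, h4⟩ (Fin.ext h)

theorem stmt_8 (k : ℕ) (hk : 1 ≤ k) :
    ∃ G : SimpleGraph (Fin (2 * k + 2)),
      G.edgeSet.ncard = 3 * k + 1 ∧ kGood G 0 ∧
      ∀ m, 5 ≤ m → Odd m → ¬ hasCycleLength G m := by
  refine ⟨bookGraph k, ?_, ⟨∅, by simp, by simp, ?_⟩, fun m hm _ => bookGraph_no_cycle k m hm⟩
  · rw [← bookEdge_range, ← Set.image_univ, Set.ncard_image_of_injective _ (bookEdge_injective k),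
      Set.ncard_univ, Nat.card_eq_fintype_card]
    simp
    omega
  · rw [SimpleGraph.deleteEdges_empty]
    exact bookGraph_good k hk
end

section
/- Let k ≥ 2 and let G be a finite simple graph containing no odd cycle of length less than 2k + 1 (i.e., no cycle C_{2j+1} for any 1 ≤ j ≤ k − 1). If C is a cycle of length 2k + 1 contained in G, then every vertex of G has at most two neighbors among the vertices of C. -/
open SimpleGraph

lemma seg_aux {α : Type*} {G : SimpleGraph α} {a b : α} (w : G.Walk a b) (i j : ℕ)
    (hij : i ≤ j) (hj : j ≤ w.length) :
    ∃ q : G.Walk (w.getVert i) (w.getVert j), q.length = j - i := by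
  refine ⟨((w.drop i).take (j - i)).copy rfl ?_, ?_⟩
  · rw [Walk.drop_getVert]; congr 1; omega
  · rw [Walk.length_copy, Walk.take_length, Walk.drop_length]; omega

/-- A closed walk of odd length yields an odd cycle that is not longer. -/
lemma odd_closed_aux {α : Type*} {G : SimpleGraph α} (n : ℕ) :
    ∀ (a : α) (w : G.Walk a a), w.length = n → n % 2 = 1 →
      ∃ j, 1 ≤ j ∧ 2 * j + 1 ≤ n ∧ hasCycleLength G (2 * j + 1) := by
  induction n using Nat.strong_induction_on with
  | _ n ih =>
    intro a w hw hn
    have hnil : ¬ w.Nil := by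
      rw [Walk.not_nil_iff_lt_length]; omega
    have hn1 : n ≠ 1 := by
      intro h
      have := w.adj_getVert_succ (i := 0) (by omega)
      have h1 : w.getVert (0 + 1) = a := by
        have := w.getVert_length
        rwa [hw, h] at this
      rw [h1, w.getVert_zero] at this
      exact G.loopless.irrefl _ this
    by_cases hc : w.IsCycle
    · refine ⟨n / 2, by omega, by omega, a, w, hc, by omega⟩
    rw [Walk.isCycle_iff_isPath_tail_and_le_length] at hc
    have hp : ¬ w.tail.IsPath := fun h => hc ⟨h, by omega⟩
    have htl := w.length_tail_add_one hnil
    have key : ∃ i j, 1 ≤ i ∧ i < j ∧ j ≤ n ∧ w.getVert i = w.getVert j := by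
      by_contra hcon
      push Not at hcon
      apply hp
      rw [← Walk.IsPath.getVert_injOn_iff]
      intro i hi j hj hij
      simp only [Set.mem_ofPred_eq, Walk.getVert_tail] at hi hj hij
      rcases lt_trichotomy i j with h | h | h
      · exact absurd hij (hcon _ _ (by omega) (by omega) (by omega))
      · exact h
      · exact absurd hij.symm (hcon _ _ (by omega) (by omega) (by omega))
    obtain ⟨i, j, hi, hij, hj, he⟩ := key
    obtain ⟨q, hq⟩ := seg_aux w i j hij.le (by omega)
    by_cases hpar : (j - i) % 2 = 1
    · obtain ⟨t, h1, h2, h3⟩ := ih (j - i) (by omega) _ (q.copy rfl he.symm) (by simpa using hq) hpar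
      exact ⟨t, h1, by omega, h3⟩
    · obtain ⟨t, h1, h2, h3⟩ := ih (n - (j - i)) (by omega) _
        (((w.take i).copy rfl he).append (w.drop j))
        (by rw [Walk.length_append, Walk.length_copy, Walk.take_length, Walk.drop_length]; omega)
        (by omega)
      exact ⟨t, h1, by omega, h3⟩

lemma three_aux {α : Type*} (G : SimpleGraph α) (k : ℕ) (hk : 2 ≤ k)
    (hno : ∀ j, 1 ≤ j → j ≤ k - 1 → ¬ hasCycleLength G (2 * j + 1))
    (a : α) (w : G.Walk a a) (hlen : w.length = 2 * k + 1) (z : α) (i j l : ℕ)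
    (hij : i < j) (hjl : j < l) (hl : l ≤ w.length)
    (hi' : G.Adj z (w.getVert i)) (hj' : G.Adj z (w.getVert j)) (hl' : G.Adj z (w.getVert l))
    (hne : w.getVert i ≠ w.getVert l) : False := by
  have main : ∀ x y (q : G.Walk x y), G.Adj z x → G.Adj z y → q.length % 2 = 1 →
      2 * k ≤ q.length + 1 := by
    intro x y q hx hy hodd
    obtain ⟨t, h1, h2, h3⟩ := odd_closed_aux (q.length + 2) z
      (Walk.cons hx (q.concat hy.symm)) (by simp) (by omega)
    by_contra hcon
    exact hno t h1 (by omega) h3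
  have hr : ¬ (i = 0 ∧ l = w.length) := by
    rintro ⟨rfl, rfl⟩
    simp at hne
  obtain ⟨p, hp⟩ := seg_aux w i j hij.le (by omega)
  obtain ⟨q, hq⟩ := seg_aux w j l hjl.le (by omega)
  have m1 := main _ _ p hi' hj'
  have m2 := main _ _ q hj' hl'
  have m3 := main _ _ ((w.drop l).append (w.take i)) hl' hi'
  rw [Walk.length_append, Walk.take_length, Walk.drop_length] at m3
  omega

theorem stmt_9 {α : Type*} [Fintype α] (G : SimpleGraph α) (k : ℕ) (hk : 2 ≤ k)
    (hno : ∀ j, 1 ≤ j → j ≤ k - 1 → ¬ hasCycleLength G (2 * j + 1))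
    (a : α) (w : G.Walk a a) (hw : w.IsCycle) (hlen : w.length = 2 * k + 1) :
    ∀ z : α, (G.neighborSet z ∩ {x | x ∈ w.support}).ncard ≤ 2 := by
  intro z
  by_contra hcon
  push Not at hcon
  rw [Set.two_lt_ncard (Set.toFinite _)] at hcon
  obtain ⟨x, ⟨hx, hxs⟩, y, ⟨hy, hys⟩, u, ⟨hu, hus⟩, hxy, hxu, hyu⟩ := hcon
  simp only [Set.mem_ofPred_eq, Walk.mem_support_iff_exists_getVert, mem_neighborSet] at *
  obtain ⟨i, rfl, hi⟩ := hxs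
  obtain ⟨j, rfl, hj⟩ := hys
  obtain ⟨l, rfl, hl⟩ := hus
  have F := three_aux G k hk hno a w hlen z
  have h1 : i ≠ j := fun h => hxy (by rw [h])
  have h2 : i ≠ l := fun h => hxu (by rw [h])
  have h3 : j ≠ l := fun h => hyu (by rw [h])
  rcases lt_or_gt_of_ne h1 with h1 | h1 <;> rcases lt_or_gt_of_ne h2 with h2 | h2 <;>
    rcases lt_or_gt_of_ne h3 with h3 | h3
  · exact F i j l h1 h3 hl hx hy hu hxu
  · exact F i l j h2 h3 hj hx hu hy hxy
  · omega
  · exact F l i j h2 h1 hj hu hx hy hyu.symm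
  · exact F j i l h1 h2 hl hy hx hu hyu
  · omega
  · exact F j l i h3 h2 hi hy hu hx hxy.symm
  · exact F l j i h3 h1 hi hu hy hx hxu.symm
end

section
/- Let k ≥ 1 and let G be a finite simple graph on n vertices containing no cycle of length 2k + 1. Then for every vertex v of G, the number of edges of G having both endpoints in N(v) is at most (2k − 1)n/2, i.e., twice this number of edges is at most (2k − 1)n. -/
open SimpleGraph

/-- closing a longest path gives a closed component -/
lemma closed_of_cycle {α : Type*} (G : SimpleGraph α) (S : Finset α) (l : List α)
    (hl : PathIn G S l) (hmax : ∀ l', PathIn G S l' → l'.length ≤ l.length)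
    (hcyc : ∀ a ∈ l.getLast?, ∀ b ∈ l.head?, G.Adj a b) (y z : α) (hy : y ∈ l) (hz : z ∈ S)
    (hyz : G.Adj y z) : z ∈ l := by
  by_contra hzl
  obtain ⟨p, q, rfl⟩ := List.append_of_mem hy
  obtain ⟨h1, h2, h3⟩ := hl
  have hperm : (z :: ((y :: q) ++ p)).Perm (z :: (p ++ y :: q)) :=
    List.Perm.cons _ List.perm_append_comm
  have := hmax (z :: ((y :: q) ++ p)) ⟨?_, ?_, ?_⟩
  · simp at this
    omega
  · rw [hperm.nodup_iff]
    exact List.nodup_cons.2 ⟨hzl, h1⟩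
  · rw [List.isChain_append] at h2
    rw [List.isChain_cons]
    refine ⟨by simpa using hyz.symm, ?_⟩
    rw [List.isChain_append]
    refine ⟨h2.2.1, h2.1, ?_⟩
    intro a ha b hb
    apply hcyc
    · rw [List.getLast?_append_of_ne_nil _ (by simp)]; exact ha
    · cases p with
      | nil => simp at hb
      | cons c p => simpa using hb
  · intro x hx
    have := hperm.mem_iff.1 hx
    rcases List.mem_cons.1 this with rfl | h
    · exact hz
    · exact h3 _ h

open Classical in
lemma exists_cycle {α : Type*} (G : SimpleGraph α) (S : Finset α) (k : ℕ) (l : List α)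
    (hl : PathIn G S l) (hmax : ∀ l', PathIn G S l' → l'.length ≤ l.length)
    (hne : l ≠ []) (hlen : l.length < 2 * k)
    (hdeg : ∀ x ∈ S, k ≤ (S.filter (G.Adj x)).card) :
    ∃ l', PathIn G S l' ∧ l'.length = l.length ∧
      (∀ a ∈ l'.getLast?, ∀ b ∈ l'.head?, G.Adj a b) := by
  have hpos : 0 < l.length := List.length_pos_iff.2 hne
  obtain ⟨h1, h2, h3⟩ := hl
  have hf : ∀ z ∈ S, G.Adj l[0] z → z ∈ l := by
    intro z hz ha
    by_contra hzl
    have := hmax (z :: l) ⟨List.nodup_cons.2 ⟨hzl, h1⟩, ?_, ?_⟩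
    · simp at this
    · rw [List.isChain_cons]
      refine ⟨?_, h2⟩
      intro y hy
      rw [List.head?_eq_getElem?] at hy
      simp [hpos] at hy
      rw [← hy]; exact ha.symm
    · intro x hx
      rcases List.mem_cons.1 hx with rfl | h
      · exact hz
      · exact h3 _ h
  have hb : ∀ z ∈ S, G.Adj l[l.length - 1] z → z ∈ l := by
    intro z hz ha
    by_contra hzl
    have := hmax (l ++ [z]) ⟨?_, ?_, ?_⟩
    · simp at this
    · rw [List.nodup_append]
      refine ⟨h1, by simp, ?_⟩
      rintro a ha b hb rfl
      simp at hb
      exact hzl (hb ▸ ha)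
    · rw [List.isChain_append]
      refine ⟨h2, by simp, ?_⟩
      intro y hy
      rw [List.getLast?_eq_getElem?] at hy
      simp [hpos] at hy
      simp only [List.head?_cons, Option.mem_some_iff, forall_eq']
      rw [← hy]; exact ha
    · intro x hx
      rcases List.mem_append.1 hx with h | h
      · exact h3 _ h
      · simp at h; exact h ▸ hz
  let A := (Finset.range (l.length - 1)).filter (fun i => ∃ h : i + 1 < l.length, G.Adj l[0] l[i+1])
  let B := (Finset.range (l.length - 1)).filter
    (fun i => ∃ h : i < l.length, G.Adj l[l.length - 1] l[i])
  have hA : k ≤ A.card := by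
    refine (hdeg l[0] (h3 _ (List.getElem_mem _))).trans ?_
    apply Finset.card_le_card_of_surjOn (fun i => (l[i+1]?).getD l[0])
    intro z hz
    simp only [Finset.coe_filter, Set.mem_ofPred_eq] at hz
    obtain ⟨i, hi, rfl⟩ := List.getElem_of_mem (hf z hz.1 hz.2)
    obtain _ | i := i
    · exact (G.irrefl hz.2).elim
    refine ⟨i, ?_, by simp [hi]⟩
    simp only [A, Finset.coe_filter, Set.mem_ofPred_eq, Finset.mem_range]
    exact ⟨by omega, hi, hz.2⟩
  have hB : k ≤ B.card := by
    refine (hdeg l[l.length - 1] (h3 _ (List.getElem_mem _))).trans ?_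
    apply Finset.card_le_card_of_surjOn (fun i => (l[i]?).getD l[0])
    intro z hz
    simp only [Finset.coe_filter, Set.mem_ofPred_eq] at hz
    obtain ⟨i, hi, rfl⟩ := List.getElem_of_mem (hb z hz.1 hz.2)
    have : i ≠ l.length - 1 := by
      rintro rfl
      exact (G.irrefl hz.2).elim
    refine ⟨i, ?_, by simp [hi]⟩
    simp only [B, Finset.coe_filter, Set.mem_ofPred_eq, Finset.mem_range]
    exact ⟨by omega, hi, hz.2⟩
  have hAB : ¬ Disjoint A B := by
    intro hd
    have h4 := Finset.card_union_of_disjoint hd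
    have h5 : (A ∪ B).card ≤ (Finset.range (l.length - 1)).card :=
      Finset.card_le_card (Finset.union_subset (Finset.filter_subset _ _) (Finset.filter_subset _ _))
    rw [Finset.card_range] at h5
    omega
  rw [Finset.not_disjoint_iff] at hAB
  obtain ⟨i, hiA, hiB⟩ := hAB
  simp only [A, B, Finset.mem_filter, Finset.mem_range] at hiA hiB
  obtain ⟨-, hi, ha⟩ := hiA
  obtain ⟨-, hi', hb'⟩ := hiB
  have hperm : ((l.take (i+1)).reverse ++ l.drop (i+1)).Perm l := by
    have : ((l.take (i+1)).reverse ++ l.drop (i+1)).Perm (l.take (i+1) ++ l.drop (i+1)) :=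
      List.Perm.append_right _ (List.reverse_perm _)
    rwa [List.take_append_drop] at this
  refine ⟨(l.take (i+1)).reverse ++ l.drop (i+1), ⟨hperm.nodup_iff.2 h1, ?_, ?_⟩,
    hperm.length_eq, ?_⟩
  · rw [List.isChain_append]
    refine ⟨?_, h2.drop _, ?_⟩
    · rw [List.isChain_reverse]
      exact (h2.take _).imp fun a b h => h.symm
    · intro a h b h'
      rw [List.getLast?_reverse, List.head?_take, List.head?_eq_getElem?] at h
      rw [List.head?_drop] at h'
      simp [hpos, hi] at h h'
      rw [← h, ← h']; exact ha
  · intro x hx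
    exact h3 _ (hperm.mem_iff.1 hx)
  · intro a h b h'
    rw [List.getLast?_append_of_ne_nil _ (by simp; omega), List.getLast?_drop] at h
    rw [List.head?_append_of_ne_nil _ (by simp [hne]), List.head?_reverse, List.getLast?_take] at h'
    simp [hi', show ¬ l.length ≤ i + 1 by omega, List.getLast?_eq_getElem?, hpos] at h h'
    rw [← h, ← h']; exact hb'

open Classical in
lemma erdos_gallai {α : Type*} (G : SimpleGraph α) (k : ℕ) (hk : 1 ≤ k) (S : Finset α)
    (hno : ∀ l, PathIn G S l → l.length ≠ 2 * k) :
    ∑ x ∈ S, (S.filter (G.Adj x)).card ≤ (2 * k - 1) * S.card := by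
  induction S using Finset.strongInduction with
  | H S ih =>
  have hlt : ∀ l, PathIn G S l → l.length < 2 * k := by
    intro l hl
    by_contra hc
    refine hno (l.take (2 * k)) ⟨hl.1.sublist (List.take_sublist _ _), hl.2.1.take _, ?_⟩ ?_
    · intro x hx
      exact hl.2.2 _ (List.mem_of_mem_take hx)
    · simp; omega
  have ih' : ∀ T ⊂ S, ∑ x ∈ T, (T.filter (G.Adj x)).card ≤ (2 * k - 1) * T.card := by
    intro T hT
    refine ih T hT fun l hl => hno l ⟨hl.1, hl.2.1, fun x hx => hT.1 (hl.2.2 x hx)⟩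
  rcases S.eq_empty_or_nonempty with rfl | ⟨s, hs⟩
  · simp
  by_cases hdeg : ∀ x ∈ S, k ≤ (S.filter (G.Adj x)).card
  · obtain ⟨l, hl, hmax⟩ : ∃ l, PathIn G S l ∧ ∀ l', PathIn G S l' → l'.length ≤ l.length := by
      have hex : ∃ n, ∃ l, PathIn G S l ∧ l.length = n := ⟨_, [], by simp [PathIn], rfl⟩
      have hbd : ∀ n, (∃ l, PathIn G S l ∧ l.length = n) → n ≤ 2 * k := by
        rintro n ⟨l, hl, rfl⟩
        exact (hlt l hl).le
      obtain ⟨n₀, hn₀⟩ := hex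
      obtain ⟨l, hl, hlen⟩ := Nat.findGreatest_spec (P := fun n => ∃ l, PathIn G S l ∧ l.length = n)
        (hbd _ hn₀) hn₀
      refine ⟨l, hl, fun l' hl' => ?_⟩
      rw [hlen]
      exact Nat.le_findGreatest (hbd _ ⟨l', hl', rfl⟩) ⟨l', hl', rfl⟩
    have hne : l ≠ [] := by
      rintro rfl
      have := hmax [s] (by simp [PathIn, hs])
      simp at this
    obtain ⟨c, hc, hcl, hcyc⟩ := exists_cycle G S k l hl hmax hne (hlt l hl) hdeg
    have hcmax : ∀ l', PathIn G S l' → l'.length ≤ c.length := by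
      intro l' h; rw [hcl]; exact hmax l' h
    have hclosed := closed_of_cycle G S c hc hcmax hcyc
    have hCS : c.toFinset ⊆ S := fun x hx => hc.2.2 x (List.mem_toFinset.1 hx)
    have hCcard : c.toFinset.card = c.length := List.toFinset_card_of_nodup hc.1
    have hcpos : 0 < c.length := by rw [hcl]; exact List.length_pos_iff.2 hne
    have hss : S \ c.toFinset ⊂ S := by
      refine Finset.sdiff_ssubset hCS ?_
      rw [← Finset.card_pos]; omega
    have h1 := ih' _ hss
    rw [← Finset.sum_sdiff hCS, ← Finset.card_sdiff_add_card_eq_card hCS, mul_add]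
    refine add_le_add ?_ ?_
    · refine le_trans (le_of_eq ?_) h1
      refine Finset.sum_congr rfl fun x hx => congrArg _ ?_
      ext z
      simp only [Finset.mem_filter, Finset.mem_sdiff, List.mem_toFinset] at hx ⊢
      constructor
      · rintro ⟨hz, hxz⟩
        exact ⟨⟨hz, fun hzc => hx.2 (hclosed z x hzc hx.1 hxz.symm)⟩, hxz⟩
      · rintro ⟨⟨hz, -⟩, hxz⟩
        exact ⟨hz, hxz⟩
    · rw [mul_comm, ← smul_eq_mul]
      refine Finset.sum_le_card_nsmul _ _ _ fun x hx => ?_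
      have : (S.filter (G.Adj x)) ⊆ c.toFinset := by
        intro z hz
        simp only [Finset.mem_filter, List.mem_toFinset] at hz hx ⊢
        exact hclosed x z hx hz.1 hz.2
      have h2 := Finset.card_le_card this
      have h3 := hlt c hc
      omega
  · push Not at hdeg
    obtain ⟨x, hx, hd⟩ := hdeg
    have h1 := ih' _ (Finset.erase_ssubset hx)
    rw [← Finset.add_sum_erase _ _ hx, ← Finset.card_erase_add_one hx, mul_add]
    have h2 : ∑ y ∈ S.erase x, (S.filter (G.Adj y)).card
        = ∑ y ∈ S.erase x, ((S.erase x).filter (G.Adj y)).card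
          + ∑ y ∈ S.erase x, if G.Adj x y then 1 else 0 := by
      rw [← Finset.sum_add_distrib]
      refine Finset.sum_congr rfl fun y hy => ?_
      conv_lhs => rw [← Finset.insert_erase hx, Finset.filter_insert]
      split_ifs with h h' h'
      · rw [Finset.card_insert_of_notMem (by simp)]
      · exact (h' h.symm).elim
      · exact (h h'.symm).elim
      · simp
    have h3 : (∑ y ∈ S.erase x, if G.Adj x y then 1 else 0) ≤ (S.filter (G.Adj x)).card := by
      rw [← Finset.card_filter]
      exact Finset.card_le_card (Finset.filter_subset_filter _ (Finset.erase_subset _ _))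
    omega

lemma cycle_of_list_s10 {α : Type*} (G : SimpleGraph α) (k : ℕ) (hk : 1 ≤ k) (v : α) (l : List α)
    (hn : l.Nodup) (hc : l.IsChain G.Adj) (hv : ∀ x ∈ l, G.Adj v x) (hlen : l.length = 2 * k) :
    hasCycleLength G (2 * k + 1) := by
  have hne : l ≠ [] := by rintro rfl; simp at hlen; omega
  have hadj : G.Adj (l.getLast hne) v := (hv _ (List.getLast_mem _)).symm
  let w := Walk.ofSupport l hne hc
  have hws : w.support = l := Walk.support_ofSupport hne hc
  have hwl : w.length = l.length - 1 := Walk.length_ofSupport hne hc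
  have hadj' : G.Adj v (l.head hne) := hv _ (List.head_mem _)
  have hvl : v ∉ l := fun h => G.irrefl (hv v h)
  refine ⟨v, Walk.cons hadj' (w.concat hadj), ?_, ?_⟩
  · rw [Walk.cons_isCycle_iff]
    constructor
    · rw [Walk.isPath_def, Walk.support_concat, hws, List.nodup_append]
      refine ⟨hn, by simp, ?_⟩
      rintro a ha b hb rfl
      simp at hb
      exact hvl (hb ▸ ha)
    · rw [Walk.edges_concat]
      simp only [List.concat_eq_append, List.mem_append, List.mem_singleton, not_or]
      refine ⟨fun h => hvl (hws ▸ Walk.fst_mem_support_of_mem_edges _ h), ?_⟩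
      intro h
      rw [Sym2.eq_swap, Sym2.congr_left] at h
      rw [List.head_eq_getElem, List.getLast_eq_getElem, hn.getElem_inj_iff] at h
      omega
  · simp [hwl]; omega

theorem stmt_10 {α : Type*} [Fintype α] (G : SimpleGraph α) (k : ℕ) (hk : 1 ≤ k)
    (hno : ¬ hasCycleLength G (2 * k + 1)) (v : α) :
    2 * {e ∈ G.edgeSet | ∀ x ∈ e, G.Adj v x}.ncard ≤ (2 * k - 1) * Fintype.card α := by
  classical
  let H : SimpleGraph α :=
    { Adj := fun x y => G.Adj x y ∧ G.Adj v x ∧ G.Adj v y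
      symm := ⟨fun x y h => ⟨h.1.symm, h.2.2, h.2.1⟩⟩
      loopless := ⟨fun x h => G.irrefl h.1⟩ }
  have hE : {e ∈ G.edgeSet | ∀ x ∈ e, G.Adj v x} = H.edgeSet := by
    ext e
    induction e using Sym2.ind with
    | _ x y => simp [H]
  have h1 : 2 * H.edgeSet.ncard = ∑ x, H.degree x := by
    rw [H.sum_degrees_eq_twice_card_edges, ← coe_edgeFinset, Set.ncard_coe_finset]
  let S : Finset α := Finset.univ.filter (G.Adj v)
  have h2 := erdos_gallai H k hk S fun l hl hlen => hno <| cycle_of_list_s10 G k hk v l hl.1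
    (hl.2.1.imp fun a b h => h.1) (fun x hx => by simpa [S] using hl.2.2 x hx) hlen
  have h3 : ∑ x, H.degree x = ∑ x ∈ S, (S.filter (H.Adj x)).card := by
    rw [← Finset.sum_subset (Finset.subset_univ S)]
    · refine Finset.sum_congr rfl fun x hx => ?_
      rw [← card_neighborFinset_eq_degree]
      congr 1
      ext y
      simp [S, H]
    · intro x _ hx
      simp only [S, Finset.mem_filter, Finset.mem_univ, true_and] at hx
      rw [← card_neighborFinset_eq_degree, Finset.card_eq_zero]
      ext y
      simp [H, hx]
  rw [hE, h1, h3]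
  refine le_trans (le_of_eq ?_) (h2.trans (Nat.mul_le_mul_left _ (Finset.card_le_univ S)))
  refine Finset.sum_congr rfl fun x _ => ?_
  congr
end

section
/- Let k ≥ 2 and ℓ ≥ 3, and let G be a finite simple graph containing no cycle of length 2k + 1. Suppose G contains pairwise vertex-disjoint paths p₁, …, p_ℓ, where each p_j is a path of length k − 2 (having k − 1 vertices) with endpoints u_j and v_j (with u_j = v_j when k = 2), and suppose u_iu_j is an edge of G for all i ≠ j. Then for any j ≠ j′ and any two distinct vertices w ∈ N(v_j) and w′ ∈ N(v_{j′}) such that neither w nor w′ lies on any of the paths p₁, …, p_ℓ, the pair ww′ is not an edge of G. -/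
open SimpleGraph

theorem stmt_11 {α : Type*} [Fintype α] (G : SimpleGraph α) (k ℓ : ℕ)
    (hk : 2 ≤ k) (hl : 3 ≤ ℓ)
    (hno : ¬ hasCycleLength G (2 * k + 1))
    (u v : Fin ℓ → α) (p : ∀ j, G.Walk (u j) (v j))
    (hpath : ∀ j, (p j).IsPath) (hlen : ∀ j, (p j).length = k - 2)
    (hdisj : ∀ i j, i ≠ j → ∀ x, x ∈ (p i).support → x ∉ (p j).support)
    (hadj : ∀ i j, i ≠ j → G.Adj (u i) (u j)) :
    ∀ j j', j ≠ j' → ∀ w w' : α, w ≠ w' →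
      G.Adj (v j) w → G.Adj (v j') w' →
      (∀ i, w ∉ (p i).support) → (∀ i, w' ∉ (p i).support) →
      ¬ G.Adj w w' := by
  intro j j' hjj w w' hww hw hw' hwn hwn' hadjw
  apply hno
  obtain ⟨m, hmj, hmj'⟩ : ∃ m : Fin ℓ, m ≠ j ∧ m ≠ j' := by
    have h : ({j, j'} : Finset (Fin ℓ)).card < (Finset.univ : Finset (Fin ℓ)).card := by
      have := Finset.card_le_two (a := j) (b := j')
      simp only [Finset.card_univ, Fintype.card_fin]
      omega
    obtain ⟨m, _, hm⟩ := Finset.exists_mem_notMem_of_card_lt_card h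
    simp only [Finset.mem_insert, Finset.mem_singleton, not_or] at hm
    exact ⟨m, hm.1, hm.2⟩
  let r : G.Walk (v j) w' := (p j).reverse.append
    (Walk.cons (hadj j m hmj.symm) (Walk.cons (hadj m j' hmj') ((p j').concat hw')))
  have hsupp : r.support = (p j).support.reverse ++ (u m :: ((p j').support ++ [w'])) := by
    simp [r, Walk.support_append, Walk.support_concat]
  have hum : ∀ i, m ≠ i → u m ∉ (p i).support := fun i hi =>
    hdisj m i hi _ (Walk.start_mem_support _)
  have humw : u m ≠ w' := fun h => hwn' m (h ▸ Walk.start_mem_support _)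
  have humw2 : w ≠ u m := fun h => hwn m (by rw [h]; exact Walk.start_mem_support _)
  have hr : r.IsPath := by
    rw [Walk.isPath_def, hsupp, List.nodup_append, List.nodup_cons, List.nodup_append]
    refine ⟨List.nodup_reverse.2 (hpath j).support_nodup, ⟨?_, (hpath j').support_nodup, by simp, ?_⟩, ?_⟩
    · simp [hum j' hmj', humw]
    · intro a ha b hb hab
      simp only [List.mem_singleton] at hb
      subst hab hb
      exact hwn' j' ha
    · intro a ha b hb hab
      subst hab
      rw [List.mem_reverse] at ha
      simp only [List.mem_cons, List.mem_append, List.not_mem_nil, or_false] at hb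
      rcases hb with hb | hb | hb
      · exact hum j hmj (hb ▸ ha)
      · exact hdisj j j' hjj a ha hb
      · exact hwn' j (hb ▸ ha)
  have hwr : w ∉ r.support := by
    rw [hsupp]
    simp [hwn j, hwn j', hww, humw2]
  refine ⟨w', Walk.cons hadjw.symm (Walk.cons hw.symm r), ?_, ?_⟩
  · rw [Walk.cons_isCycle_iff]
    refine ⟨hr.cons hwr, ?_⟩
    rw [Walk.edges_cons, List.mem_cons, not_or]
    refine ⟨?_, fun h => hwr (Walk.snd_mem_support_of_mem_edges _ h)⟩
    intro h
    rw [Sym2.eq_iff] at h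
    rcases h with ⟨h, _⟩ | ⟨h, _⟩
    · exact hww h.symm
    · exact hwn' j (by rw [h]; exact Walk.end_mem_support _)
  · simp [r, hlen]
    omega
end

section
/- Let k ≥ 2 and ℓ ≥ 2, and let G be a finite simple graph containing no cycle of length 2k + 1. Suppose G contains pairwise vertex-disjoint paths p₁, …, p_ℓ, where each p_j is a path of length k − 2 (having k − 1 vertices) with endpoints u_j and v_j (with u_j = v_j when k = 2), and suppose u_iu_j is an edge of G for all i ≠ j. Let j ≠ j′ and let w, w_j, w_{j′} be three distinct vertices, none of which lies on any of the paths p₁, …, p_ℓ, with w_j ∈ N(v_j) and w_{j′} ∈ N(v_{j′}). Then w is not adjacent to both w_j and w_{j′}. -/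
open SimpleGraph

theorem stmt_12 {α : Type*} [Fintype α] (G : SimpleGraph α) (k ℓ : ℕ)
    (hk : 2 ≤ k) (hl : 2 ≤ ℓ)
    (hno : ¬ hasCycleLength G (2 * k + 1))
    (u v : Fin ℓ → α) (p : ∀ j, G.Walk (u j) (v j))
    (hpath : ∀ j, (p j).IsPath) (hlen : ∀ j, (p j).length = k - 2)
    (hdisj : ∀ i j, i ≠ j → ∀ x, x ∈ (p i).support → x ∉ (p j).support)
    (hadj : ∀ i j, i ≠ j → G.Adj (u i) (u j)) :
    ∀ j j', j ≠ j' → ∀ w wj wj' : α, w ≠ wj → w ≠ wj' → wj ≠ wj' →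
      (∀ i, w ∉ (p i).support) → (∀ i, wj ∉ (p i).support) → (∀ i, wj' ∉ (p i).support) →
      G.Adj (v j) wj → G.Adj (v j') wj' →
      ¬ (G.Adj w wj ∧ G.Adj w wj') := by
  classical
  intro j j' hjj w wj wj' h1 h2 h3 hw hwj hwj' a1 a2 ⟨b1, b2⟩
  apply hno
  have hd := hdisj j j' hjj
  let r : G.Walk (u j) wj' := Walk.cons (hadj j j' hjj) ((p j').concat a2)
  let q : G.Walk wj wj' := Walk.cons a1.symm ((p j).reverse.append r)
  have hr : r.support = u j :: ((p j').support ++ [wj']) := by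
    simp [r, Walk.support_concat]
  have hq : q.support = wj :: ((p j).support.reverse ++ ((p j').support ++ [wj'])) := by
    simp only [q, Walk.support_cons, Walk.support_append, hr, Walk.support_reverse, List.tail_cons]
  have hwq : w ∉ q.support := by
    rw [hq]
    simp [h1, h2, hw]
  have hqp : q.IsPath := by
    rw [Walk.isPath_def, hq]
    have n1 := (hpath j).support_nodup
    have n2 := (hpath j').support_nodup
    have e1 := hwj j
    have e2 := hwj j'
    have e3 := hwj' j
    have e4 := hwj' j'
    simp only [List.nodup_cons, List.nodup_append, List.mem_append, List.mem_reverse,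
      List.nodup_reverse, List.mem_singleton]
    grind
  refine ⟨wj', Walk.cons b2.symm (Walk.cons b1 q), ?_, ?_⟩
  · rw [Walk.cons_isCycle_iff]
    refine ⟨hqp.cons hwq, ?_⟩
    rw [Walk.edges_cons, List.mem_cons]
    rintro (h | h)
    · rw [Sym2.eq_iff] at h
      grind
    · exact hwq (Walk.snd_mem_support_of_mem_edges _ h)
  · simp only [q, r, Walk.length_cons, Walk.length_append, Walk.length_reverse,
      Walk.length_concat, hlen]
    omega
end

section
/- Let k ≥ 1 and let G be a finite simple graph containing no odd cycle of length less than 2k + 1 (no cycle C_{2j+1} for any 1 ≤ j ≤ k − 1). Suppose x′ is a vertex adjacent to two distinct vertices v′ and v″, and suppose x is a vertex distinct from x′, v′ and v″ whose unique neighbor in G is v′. Then the graph obtained from G by adding the edge xv″ contains no odd cycle of length less than 2k + 1. -/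
open SimpleGraph

/-- Any walk either witnesses a short odd cycle, or reduces to a path of the same parity. -/
theorem walk_reduce {α : Type*} (G : SimpleGraph α) {u v : α} (p : G.Walk u v) :
    (∃ m, Odd m ∧ 3 ≤ m ∧ m ≤ p.length ∧ hasCycleLength G m) ∨
    (∃ q : G.Walk u v, q.IsPath ∧ q.length ≤ p.length ∧ q.length % 2 = p.length % 2) := by
  classical
  induction p with
  | nil => exact Or.inr ⟨Walk.nil, by simp, by simp, by simp⟩
  | @cons u w v h p ih =>
    rcases ih with ⟨m, hm, h3, hle, hc⟩ | ⟨q, hq, hle, hpar⟩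
    · exact Or.inl ⟨m, hm, h3, by simp only [Walk.length_cons]; omega, hc⟩
    · by_cases hu : u ∈ q.support
      · have hlen : (q.takeUntil u hu).length + (q.dropUntil u hu).length = q.length := by
          rw [← Walk.length_append, Walk.take_spec]
        have hne : (q.takeUntil u hu).length ≠ 0 := fun h0 =>
          h.ne (Walk.eq_of_length_eq_zero h0).symm
        by_cases ht : (q.takeUntil u hu).length % 2 = 0
        · refine Or.inl ⟨(q.takeUntil u hu).length + 1, ?_, by omega, ?_, u,
            Walk.cons h (q.takeUntil u hu), ?_, by simp⟩
          · rw [Nat.odd_iff]; omega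
          · simp only [Walk.length_cons]; omega
          · rw [Walk.isCycle_iff_isPath_tail_and_le_length]
            refine ⟨by simpa using hq.takeUntil hu, ?_⟩
            simp only [Walk.length_cons]; omega
        · refine Or.inr ⟨q.dropUntil u hu, hq.dropUntil hu, ?_, ?_⟩ <;>
            simp only [Walk.length_cons] <;> omega
      · refine Or.inr ⟨Walk.cons h q, hq.cons hu, ?_, ?_⟩ <;>
          simp only [Walk.length_cons] <;> omega

theorem stmt_13 {α : Type*} [Fintype α] (G : SimpleGraph α) (k : ℕ) (hk : 1 ≤ k)
    (hno : ∀ j, 1 ≤ j → j ≤ k - 1 → ¬ hasCycleLength G (2 * j + 1))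
    (x' v' v'' x : α) (hne : v' ≠ v'')
    (h1 : G.Adj x' v') (h2 : G.Adj x' v'')
    (hx1 : x ≠ x') (hx2 : x ≠ v') (hx3 : x ≠ v'')
    (hnbr : G.neighborSet x = {v'}) :
    ∀ j, 1 ≤ j → j ≤ k - 1 → ¬ hasCycleLength (addEdge G x v'') (2 * j + 1) := by
  classical
  intro j hj1 hj2 ⟨a, w, hw, hl⟩
  have hxv : ∀ b, G.Adj x b → b = v' := fun b hb => by
    have : b ∈ G.neighborSet x := hb
    rw [hnbr] at this
    exact this
  let f : addEdge G x v'' →g G :=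
    { toFun := fun y => if y = x then x' else y
      map_rel' := by
        intro b c hbc
        simp only [addEdge, sup_adj, fromEdgeSet_adj, Set.mem_singleton_iff, Sym2.eq_iff] at hbc
        rcases hbc with hbc | ⟨⟨rfl, rfl⟩ | ⟨rfl, rfl⟩, -⟩
        · by_cases hb : b = x
          · subst hb
            obtain rfl := hxv c hbc
            simpa [hx2.symm] using h1
          · by_cases hc : c = x
            · subst hc
              obtain rfl := hxv b hbc.symm
              simpa [hb] using h1.symm
            · simpa [hb, hc] using hbc
        · simpa [hx3.symm] using h2
        · simpa [hx3.symm] using h2.symm }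
  have hlen : (w.map f).length = 2 * j + 1 := by simp [hl]
  rcases walk_reduce G (w.map f) with ⟨m, hm, h3, hle, hc⟩ | ⟨q, hq, -, hpar⟩
  · obtain ⟨i, rfl⟩ := hm
    exact hno i (by omega) (by omega) hc
  · have : q.length = 0 := by rw [(Walk.isPath_iff_nil.1 hq).eq_nil]; rfl
    omega
end

section
/- Let G be a finite simple graph, u a vertex of G, ℓ ≥ 6 an even integer, and fix a linear order on the vertices of G. For a vertex u′ with d(u′,u) = ℓ, call a vertex x the representative of u′ if d(x,u) = 4, d(x,u′) = ℓ − 4 (so x lies on a shortest path from u′ to u), and x is minimal in the linear order among all vertices with these two properties. Let R be the set of all vertices of G that are the representative of at least one vertex at distance ℓ from u. Then |R| · (ℓ/2 − 1) ≤ |{w ∈ V(G) : d(w,u) is even and 4 ≤ d(w,u) ≤ ℓ}|. -/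
open SimpleGraph

theorem stmt_14 {α : Type*} [Fintype α] [LinearOrder α] (G : SimpleGraph α)
    (u : α) (ℓ : ℕ) (hl : 6 ≤ ℓ) (hle : Even ℓ) :
    {x : α | ∃ u', G.dist u' u = ℓ ∧
        ((G.dist x u = 4 ∧ G.dist x u' = ℓ - 4) ∧
          ∀ y : α, G.dist y u = 4 ∧ G.dist y u' = ℓ - 4 → x ≤ y)}.ncard * (ℓ / 2 - 1)
      ≤ {w : α | Even (G.dist w u) ∧ 4 ≤ G.dist w u ∧ G.dist w u ≤ ℓ}.ncard := by
  classical
  set R := {x : α | ∃ u', G.dist u' u = ℓ ∧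
        ((G.dist x u = 4 ∧ G.dist x u' = ℓ - 4) ∧
          ∀ y : α, G.dist y u = 4 ∧ G.dist y u' = ℓ - 4 → x ≤ y)} with hR
  set S := {w : α | Even (G.dist w u) ∧ 4 ≤ G.dist w u ∧ G.dist w u ≤ ℓ} with hS
  have walk_of : ∀ a b : α, G.dist a b ≠ 0 → ∃ p : G.Walk a b, p.length = G.dist a b :=
    fun a b h => (Reachable.of_dist_ne_zero h).exists_walk_length_eq_dist
  -- choose the vertices on the shortest paths
  have key : ∀ (x : R) (j : Fin (ℓ / 2 - 1)), ∃ w : α, G.dist w u = 4 + 2 * j ∧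
      (∃ q : G.Walk x.1 w, q.length = 2 * j) ∧
      ∀ y : α, G.dist y u = 4 → (∃ q : G.Walk y w, q.length = 2 * j) → x.1 ≤ y := by
    rintro ⟨x, u', h1, ⟨h2, h3⟩, h4⟩ ⟨j, hj⟩
    obtain ⟨p, hp⟩ := walk_of x u' (by omega)
    obtain ⟨r, hr⟩ := walk_of x u (by omega)
    have l1 : (p.take (2 * j)).length = 2 * j := by
      rw [Walk.take_length]; omega
    have l2 : (p.drop (2 * j)).length = ℓ - 4 - 2 * j := by
      rw [Walk.drop_length]; omega
    have hd : G.dist (p.getVert (2 * j)) u = 4 + 2 * j := by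
      apply le_antisymm
      · have := dist_le ((p.take (2 * j)).reverse.append r)
        rw [Walk.length_append, Walk.length_reverse] at this
        omega
      · have hreach : G.Reachable (p.getVert (2 * j)) u :=
          ⟨(p.take (2 * j)).reverse.append r⟩
        obtain ⟨s, hs⟩ := hreach.exists_walk_length_eq_dist
        have := dist_le ((p.drop (2 * j)).reverse.append s)
        rw [Walk.length_append, Walk.length_reverse] at this
        omega
    refine ⟨p.getVert (2 * j), hd, ⟨_, l1⟩, ?_⟩
    rintro y hy ⟨q, hq⟩
    refine h4 y ⟨hy, le_antisymm ?_ ?_⟩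
    · have := dist_le (q.append (p.drop (2 * j)))
      rw [Walk.length_append] at this
      simp only at hq
      omega
    · have hreach : G.Reachable y u' := ⟨q.append (p.drop (2 * j))⟩
      obtain ⟨s, hs⟩ := hreach.exists_walk_length_eq_dist
      obtain ⟨t, ht⟩ := walk_of y u (by omega)
      have := dist_le (s.reverse.append t)
      rw [Walk.length_append, Walk.length_reverse] at this
      omega
  choose f hf1 hf2 hf3 using key
  have hRd : ∀ x : R, G.dist x.1 u = 4 := by
    rintro ⟨x, u', h1, ⟨h2, h3⟩, h4⟩
    exact h2
  let F : R × Fin (ℓ / 2 - 1) → S := fun z => ⟨f z.1 z.2, by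
    have := hf1 z.1 z.2
    have hj := z.2.2
    refine ⟨?_, ?_, ?_⟩
    · rw [this]; exact ⟨2 + z.2, by ring⟩
    · omega
    · omega⟩
  have hF : Function.Injective F := by
    rintro ⟨x, i⟩ ⟨y, j⟩ h
    have h' : f x i = f y j := congrArg Subtype.val h
    have e1 := hf1 x i
    rw [h', hf1 y j] at e1
    have hij : j = i := Fin.ext (by omega)
    subst hij
    have a := hf3 x j y (hRd y) (h' ▸ hf2 y j)
    have b := hf3 y j x (hRd x) (h' ▸ hf2 x j)
    rw [Subtype.ext (le_antisymm a b)]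
  have := Nat.card_le_card_of_injective F hF
  rwa [Nat.card_prod, Nat.card_fin, Nat.card_coe_set_eq, Nat.card_coe_set_eq] at this
end

section
/- Let 1 < γ ≤ 2 and let (G, u, v, U, V) be γ-good. Let x ∈ U and y ∈ V with xy not an edge of G, and let G′ be the graph obtained from G by adding the edge xy. If G′ has an isolated vertex, then there exist a pair of nonadjacent vertices a, b of G′ and disjoint vertex sets U′ ⊇ U and V′ ⊇ V such that (G′ + ab, u, v, U′, V′) is γ-good. -/
open SimpleGraph

/-- `b_U = |V₁| + |U| − γ|V| − δ`, where `V₁ = V ∖ N_G(u)` and `δ = 1/(γ−1)`. -/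
noncomputable def bU {α : Type*} (γ : ℝ) (G : SimpleGraph α) (u : α) (U V : Set α) : ℝ :=
  ((V \ G.neighborSet u).ncard : ℝ) + U.ncard - γ * V.ncard - 1 / (γ - 1)

/-- `b_V = |U₁| + |V| − γ|U| − δ`, where `U₁ = U ∖ N_G(v)` and `δ = 1/(γ−1)`. -/
noncomputable def bV {α : Type*} (γ : ℝ) (G : SimpleGraph α) (v : α) (U V : Set α) : ℝ :=
  ((U \ G.neighborSet v).ncard : ℝ) + V.ncard - γ * U.ncard - 1 / (γ - 1)

/-- The tuple `(G, u, v, U, V)` is `γ`-good. -/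
def GammaGood {α : Type*} (γ : ℝ) (G : SimpleGraph α) (u v : α) (U V : Set α) : Prop :=
  G.Adj u v ∧ u ∈ U ∧ v ∈ V ∧ Disjoint U V ∧
  -- (1*): exactly one connected component contains an edge, its vertex set is `U ∪ V`,
  -- and it is bipartite with parts `U` and `V` (both independent sets)
  (∃! c : G.ConnectedComponent, ∃ x y, G.Adj x y ∧ G.connectedComponentMk x = c) ∧
  {w | G.connectedComponentMk w = G.connectedComponentMk u} = U ∪ V ∧
  (∀ a ∈ U, ∀ b ∈ U, ¬ G.Adj a b) ∧
  (∀ a ∈ V, ∀ b ∈ V, ¬ G.Adj a b) ∧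
  -- (2*): every vertex of `U ∪ V` has a neighbor in `U₀ ∪ V₀ = N(v) ∪ N(u)`
  (∀ w ∈ U ∪ V, ∃ z ∈ G.neighborSet v ∪ G.neighborSet u, G.Adj w z) ∧
  -- (3*) and (4*)
  bU γ G u U V ≤ 0 ∧ bV γ G v U V ≤ 0 ∧ bU γ G u U V + bV γ G v U V ≤ -2

theorem addEdge_adj {α : Type*} (G : SimpleGraph α) (x y a b : α) :
    (addEdge G x y).Adj a b ↔ G.Adj a b ∨ (((a = x ∧ b = y) ∨ (a = y ∧ b = x)) ∧ a ≠ b) := by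
  simp [addEdge]

theorem good_edges {α : Type*} {γ : ℝ} {G : SimpleGraph α} {u v : α} {U V : Set α}
    (hg : GammaGood γ G u v U V) (a b : α) (h : G.Adj a b) :
    (a ∈ U ∧ b ∈ V) ∨ (a ∈ V ∧ b ∈ U) := by
  obtain ⟨huv, hu, hv, hd, ⟨c, hc, hcu⟩, hcomp, hU, hV, h2, -⟩ := hg
  have key : ∀ a b, G.Adj a b → a ∈ U ∪ V := by
    intro a b h
    rw [← hcomp]
    exact (hcu _ ⟨a, b, h, rfl⟩).trans (hcu _ ⟨u, v, huv, rfl⟩).symm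
  have ha := key a b h
  have hb := key b a h.symm
  have := hU a
  have := hV a
  rcases ha with ha | ha <;> rcases hb with hb | hb
  · exact absurd h (hU a ha b hb)
  · exact Or.inl ⟨ha, hb⟩
  · exact Or.inr ⟨ha, hb⟩
  · exact absurd h (hV a ha b hb)

theorem good_mk {α : Type*} {γ : ℝ} {G : SimpleGraph α} {u v : α} {U V : Set α}
    (huv : G.Adj u v) (hu : u ∈ U) (hv : v ∈ V) (hd : Disjoint U V)
    (he : ∀ a b, G.Adj a b → (a ∈ U ∧ b ∈ V) ∨ (a ∈ V ∧ b ∈ U))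
    (h2 : ∀ w ∈ U ∪ V, ∃ z ∈ G.neighborSet v ∪ G.neighborSet u, G.Adj w z)
    (h3 : bU γ G u U V ≤ 0) (h3' : bV γ G v U V ≤ 0)
    (h4 : bU γ G u U V + bV γ G v U V ≤ -2) : GammaGood γ G u v U V := by
  rw [Set.disjoint_left] at hd
  have hr : ∀ w ∈ U ∪ V, G.Reachable w u := by
    intro w hw
    obtain ⟨z, hz, hwz⟩ := h2 w hw
    rcases hz with hz | hz
    · exact hwz.reachable.trans ((SimpleGraph.Adj.reachable hz).symm.trans huv.reachable.symm)
    · exact hwz.reachable.trans (SimpleGraph.Adj.reachable hz).symm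
  have hin : ∀ a b, G.Adj a b → a ∈ U ∪ V := fun a b h =>
    (he a b h).elim (fun h => Or.inl h.1) (fun h => Or.inr h.1)
  refine ⟨huv, hu, hv, Set.disjoint_left.2 hd, ⟨G.connectedComponentMk u, ⟨u, v, huv, rfl⟩, ?_⟩, ?_,
    ?_, ?_, h2, h3, h3', h4⟩
  · rintro c ⟨a, b, hab, rfl⟩
    exact SimpleGraph.ConnectedComponent.sound (hr a (hin a b hab))
  · ext w
    constructor
    · intro h
      obtain ⟨p⟩ := SimpleGraph.ConnectedComponent.exact h
      cases p with
      | nil => exact Or.inl hu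
      | cons h _ => exact hin _ _ h
    · intro h
      exact SimpleGraph.ConnectedComponent.sound (hr w h)
  · intro a ha b hb h
    rcases he a b h with h | h
    · exact hd hb h.2
    · exact hd ha h.1
  · intro a ha b hb h
    rcases he a b h with h | h
    · exact hd h.1 ha
    · exact hd h.2 hb

theorem good_symm {α : Type*} {γ : ℝ} {G : SimpleGraph α} {u v : α} {U V : Set α}
    (hg : GammaGood γ G u v U V) : GammaGood γ G v u V U := by
  have he := good_edges hg
  obtain ⟨huv, hu, hv, hd, -, -, -, -, h2, h3, h3', h4⟩ := hg
  refine good_mk huv.symm hv hu hd.symm (fun a b h => (he a b h).symm) ?_ h3' h3 ?_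
  · rw [Set.union_comm, Set.union_comm (G.neighborSet u)]
    exact h2
  · rw [add_comm]
    exact h4

theorem good_addEdge {α : Type*} [Finite α] {γ : ℝ} {G : SimpleGraph α} {u v : α} {U V : Set α}
    (hg : GammaGood γ G u v U V) {x y : α} (hx : x ∈ U) (hy : y ∈ V) :
    GammaGood γ (addEdge G x y) u v U V := by
  have he := good_edges hg
  obtain ⟨huv, hu, hv, hd, -, -, -, -, h2, h3, h3', h4⟩ := hg
  have hle : G ≤ addEdge G x y := le_sup_left
  have hn : ∀ w, G.neighborSet w ⊆ (addEdge G x y).neighborSet w := fun w z hz => hle hz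
  have e1 : bU γ (addEdge G x y) u U V ≤ bU γ G u U V := by
    have : (V \ (addEdge G x y).neighborSet u).ncard ≤ (V \ G.neighborSet u).ncard :=
      Set.ncard_le_ncard (Set.sdiff_subset_sdiff_right (hn u)) (Set.toFinite _)
    have : ((V \ (addEdge G x y).neighborSet u).ncard : ℝ) ≤ (V \ G.neighborSet u).ncard := by
      exact_mod_cast this
    unfold bU
    linarith
  have e2 : bV γ (addEdge G x y) v U V ≤ bV γ G v U V := by
    have : (U \ (addEdge G x y).neighborSet v).ncard ≤ (U \ G.neighborSet v).ncard :=
      Set.ncard_le_ncard (Set.sdiff_subset_sdiff_right (hn v)) (Set.toFinite _)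
    have : ((U \ (addEdge G x y).neighborSet v).ncard : ℝ) ≤ (U \ G.neighborSet v).ncard := by
      exact_mod_cast this
    unfold bV
    linarith
  refine good_mk (hle huv) hu hv hd ?_ ?_ (by linarith) (by linarith) (by linarith)
  · intro a b h
    rw [addEdge_adj] at h
    rcases h with h | ⟨⟨rfl, rfl⟩ | ⟨rfl, rfl⟩, -⟩
    · exact he a b h
    · exact Or.inl ⟨hx, hy⟩
    · exact Or.inr ⟨hy, hx⟩
  · intro w hw
    obtain ⟨z, hz, h⟩ := h2 w hw
    exact ⟨z, Set.union_subset_union (hn v) (hn u) hz, hle h⟩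

theorem good_extend {α : Type*} [Finite α] {γ : ℝ} (hγ1 : 1 < γ) (hγ2 : γ ≤ 2)
    {G : SimpleGraph α} {u v : α} {U V : Set α}
    (hg : GammaGood γ G u v U V) (hc : ∀ a ∈ U, ∀ b ∈ V, G.Adj a b)
    (hcard : U.ncard ≤ V.ncard) {z : α} (hzU : z ∉ U) (hzV : z ∉ V) :
    GammaGood γ (addEdge G z v) u v (insert z U) V := by
  have he := good_edges hg
  obtain ⟨huv, hu, hv, hd, -, -, -, -, h2, h3, h3', h4⟩ := hg
  have hle : G ≤ addEdge G z v := le_sup_left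
  have hn : ∀ w, G.neighborSet w ⊆ (addEdge G z v).neighborSet w := fun w z hz => hle hz
  have hzv : z ≠ v := fun h => hzV (h ▸ hv)
  have hadj : (addEdge G z v).Adj z v := by
    rw [addEdge_adj]
    exact Or.inr ⟨Or.inl ⟨rfl, rfl⟩, hzv⟩
  have s0 : V \ G.neighborSet u = ∅ := Set.sdiff_eq_empty.2 fun b hb => hc u hu b hb
  have s0' : U \ G.neighborSet v = ∅ := Set.sdiff_eq_empty.2 fun b hb => (hc b hb v hv).symm
  have s1 : V \ (addEdge G z v).neighborSet u = ∅ :=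
    Set.sdiff_eq_empty.2 fun b hb => hle (hc u hu b hb)
  have s2 : insert z U \ (addEdge G z v).neighborSet v = ∅ := by
    refine Set.sdiff_eq_empty.2 fun b hb => ?_
    rcases hb with rfl | hb
    · exact hadj.symm
    · exact hle (hc b hb v hv).symm
  have hcardR : (U.ncard : ℝ) ≤ V.ncard := by exact_mod_cast hcard
  have hi : (insert z U).ncard = U.ncard + 1 := Set.ncard_insert_of_notMem hzU (Set.toFinite _)
  have hδ : 1 ≤ 1 / (γ - 1) := by
    rw [le_div_iff₀ (by linarith)]
    linarith
  have hU0 : (0 : ℝ) ≤ U.ncard := Nat.cast_nonneg _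
  have hV0 : (0 : ℝ) ≤ V.ncard := Nat.cast_nonneg _
  have m1 : 0 ≤ (γ - 1) * U.ncard := mul_nonneg (by linarith) hU0
  have m2 : 0 ≤ (γ - 1) * V.ncard := mul_nonneg (by linarith) hV0
  unfold bV at h3'
  rw [s0'] at h3'
  simp only [Set.ncard_empty, Nat.cast_zero, zero_add] at h3'
  refine good_mk (hle huv) (Or.inr hu) hv ?_ ?_ ?_ ?_ ?_ ?_
  · rw [Set.disjoint_insert_left]
    exact ⟨hzV, hd⟩
  · intro a b h
    rw [addEdge_adj] at h
    rcases h with h | ⟨⟨rfl, rfl⟩ | ⟨rfl, rfl⟩, -⟩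
    · rcases he a b h with h | h
      · exact Or.inl ⟨Or.inr h.1, h.2⟩
      · exact Or.inr ⟨h.1, Or.inr h.2⟩
    · exact Or.inl ⟨Or.inl rfl, hv⟩
    · exact Or.inr ⟨hv, Or.inl rfl⟩
  · rintro w ((rfl | hw) | hw)
    · exact ⟨v, Or.inr (hle huv), hadj⟩
    · exact ⟨v, Or.inr (hle huv), hle (hc w hw v hv)⟩
    · exact ⟨u, Or.inl (hle huv.symm), hle (hc u hu w hw).symm⟩
  · unfold bU
    rw [s1, hi, Set.ncard_empty]
    push_cast
    linarith
  · unfold bV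
    rw [s2, hi, Set.ncard_empty]
    push_cast
    linarith
  · unfold bU bV
    rw [s1, s2, hi, Set.ncard_empty]
    push_cast
    linarith

theorem stmt_15 {α : Type*} [Fintype α] (γ : ℝ) (hγ1 : 1 < γ) (hγ2 : γ ≤ 2)
    (G : SimpleGraph α) (u v : α) (U V : Set α)
    (hg : GammaGood γ G u v U V)
    (x y : α) (hx : x ∈ U) (hy : y ∈ V) (hxy : ¬ G.Adj x y)
    (hiso : ∃ z : α, (addEdge G x y).neighborSet z = ∅) :
    ∃ a b : α, a ≠ b ∧ ¬ (addEdge G x y).Adj a b ∧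
      ∃ U' V' : Set α, U ⊆ U' ∧ V ⊆ V' ∧ Disjoint U' V' ∧
        GammaGood γ (addEdge (addEdge G x y) a b) u v U' V' := by
  have hg' := good_addEdge hg hx hy
  by_cases hc : ∀ a ∈ U, ∀ b ∈ V, (addEdge G x y).Adj a b
  · obtain ⟨z, hz⟩ := hiso
    have hno : ∀ w, ¬ (addEdge G x y).Adj z w := fun w hw => by
      have : w ∈ (addEdge G x y).neighborSet z := hw
      rw [hz] at this
      exact this
    have hu : u ∈ U := hg.2.1
    have hv : v ∈ V := hg.2.2.1
    have hzU : z ∉ U := fun h => hno v (hc z h v hv)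
    have hzV : z ∉ V := fun h => hno u (hc u hu z h).symm
    rcases le_total U.ncard V.ncard with h | h
    · have hgood := good_extend hγ1 hγ2 hg' hc h hzU hzV
      exact ⟨z, v, fun h => hzV (h ▸ hv), hno v, insert z U, V, Set.subset_insert _ _, subset_rfl,
        hgood.2.2.2.1, hgood⟩
    · have hgood := good_symm (good_extend hγ1 hγ2 (good_symm hg')
        (fun a ha b hb => (hc b hb a ha).symm) h hzV hzU)
      exact ⟨z, u, fun h => hzU (h ▸ hu), hno u, U, insert z V, subset_rfl, Set.subset_insert _ _,
        hgood.2.2.2.1, hgood⟩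
  · push Not at hc
    obtain ⟨a, ha, b, hb, hab⟩ := hc
    exact ⟨a, b, fun h => Set.disjoint_left.1 hg.2.2.2.1 ha (h ▸ hb), hab, U, V, subset_rfl,
      subset_rfl, hg.2.2.2.1, good_addEdge hg' ha hb⟩
end

section
/- Let (G, u, v, U, V) be (3/2)-good (so δ = 2). Let x ∈ V and let y be a vertex not in U ∪ V, let G′ be the graph obtained from G by adding the edge xy, and suppose |U| + 1 > (3/2)|V| + 2. If z is an isolated vertex of G′, then the graph G″ obtained from G′ by adding the edge zu satisfies: (G″, u, v, U ∪ {y}, V ∪ {z}) is (3/2)-good. -/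
open SimpleGraph

theorem addEdge_adj_iff {α : Type*} (G : SimpleGraph α) (x y a b : α) (h : x ≠ y) :
    (addEdge G x y).Adj a b ↔ G.Adj a b ∨ (a = x ∧ b = y) ∨ (a = y ∧ b = x) := by
  simp only [addEdge, SimpleGraph.sup_adj, SimpleGraph.fromEdgeSet_adj, Set.mem_singleton_iff,
    Sym2.eq_iff]
  grind

theorem stmt_18 {α : Type*} [Fintype α]
    (G : SimpleGraph α) (u v : α) (U V : Set α)
    (hg : GammaGood (3 / 2) G u v U V)
    (x y : α) (hx : x ∈ V) (hy : y ∉ U ∪ V)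
    (hov : (U.ncard : ℝ) + 1 > (3 / 2) * V.ncard + 2)
    (z : α) (hz : (addEdge G x y).neighborSet z = ∅) :
    GammaGood (3 / 2) (addEdge (addEdge G x y) z u) u v (U ∪ {y}) (V ∪ {z}) := by
  obtain ⟨huv, hu, hv, hd, hc, hcomp, hU, hV, h2, h3, h3', h4⟩ := hg
  have hxy : x ≠ y := by rintro rfl; exact hy (Or.inr hx)
  have hzn : ∀ b, ¬ (addEdge G x y).Adj z b := by
    intro b hb
    have : b ∈ (addEdge G x y).neighborSet z := hb
    rw [hz] at this; exact this
  have hA := fun a b => addEdge_adj_iff G x y a b hxy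
  have hzG : ∀ b, ¬ G.Adj z b := fun b hb => hzn b ((hA z b).2 (Or.inl hb))
  have hzy : z ≠ y := by
    rintro rfl; exact hzn x ((hA _ _).2 (by simp))
  have hzUV : z ∉ U ∪ V := by
    intro h
    obtain ⟨w, -, hw⟩ := h2 z h
    exact hzG w hw
  have hzu : z ≠ u := by rintro rfl; exact hzUV (Or.inl hu)
  have hB : ∀ a b, (addEdge (addEdge G x y) z u).Adj a b ↔
      G.Adj a b ∨ (a = x ∧ b = y) ∨ (a = y ∧ b = x) ∨ (a = z ∧ b = u) ∨ (a = u ∧ b = z) := by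
    intro a b
    rw [addEdge_adj_iff _ z u a b hzu, hA]; tauto
  have hle : G ≤ addEdge (addEdge G x y) z u := fun a b h => (hB a b).2 (Or.inl h)
  generalize addEdge (addEdge G x y) z u = H at hB hle ⊢
  have hdj : ∀ a, a ∈ U → a ∉ V := fun a h h' => Set.disjoint_left.1 hd h h'
  have hcl : ∀ a b, G.Adj a b → a ∈ U ∪ V := by
    intro a b hab
    rw [← hcomp]
    exact hc.unique ⟨a, b, hab, rfl⟩ ⟨u, v, huv, rfl⟩
  have hy' : y ∉ U ∧ y ∉ V := by simpa using hy
  have hz' : z ∉ U ∧ z ∉ V := by simpa using hzUV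
  have hcl' : ∀ a b, H.Adj a b → a ∈ (U ∪ {y}) ∪ (V ∪ {z}) := by
    intro a b hab
    rcases (hB a b).1 hab with h | ⟨rfl, -⟩ | ⟨rfl, -⟩ | ⟨rfl, -⟩ | ⟨rfl, -⟩
    · rcases hcl a b h with h | h <;> simp [h]
    all_goals simp [*]
  have hV1 : V \ G.neighborSet u = ∅ := by
    have : ((V \ G.neighborSet u).ncard : ℝ) < 1 := by
      unfold bU at h3; norm_num at h3; linarith
    have h0 : (V \ G.neighborSet u).ncard = 0 := by
      have : (V \ G.neighborSet u).ncard < 1 := by exact_mod_cast this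
      omega
    exact (Set.ncard_eq_zero (Set.toFinite _)).1 h0
  have hVu : ∀ a ∈ V, G.Adj u a := by
    intro a ha
    by_contra h
    have : a ∈ V \ G.neighborSet u := ⟨ha, h⟩
    rw [hV1] at this; exact this
  have hreachUV : ∀ w ∈ U ∪ V, H.Reachable w u := by
    intro w hw
    rw [← hcomp] at hw
    exact (ConnectedComponent.exact hw).mono hle
  have hreach : ∀ w ∈ (U ∪ {y}) ∪ (V ∪ {z}), H.Reachable w u := by
    rintro w ((h | h) | (h | h))
    · exact hreachUV w (Or.inl h)
    · rw [Set.mem_singleton_iff] at h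
      subst h
      have : H.Adj w x := (hB _ _).2 (by simp)
      exact this.reachable.trans (hreachUV x (Or.inr hx))
    · exact hreachUV w (Or.inr h)
    · rw [Set.mem_singleton_iff] at h
      subst h
      have : H.Adj w u := (hB _ _).2 (by simp)
      exact this.reachable
  have hUn : (U ∪ {y}).ncard = U.ncard + 1 := by
    rw [Set.union_singleton, Set.ncard_insert_of_notMem hy'.1 (Set.toFinite _)]
  have hVn : (V ∪ {z}).ncard = V.ncard + 1 := by
    rw [Set.union_singleton, Set.ncard_insert_of_notMem hz'.2 (Set.toFinite _)]
  have hV1' : (V ∪ {z}) \ H.neighborSet u = ∅ := by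
    rw [Set.diff_eq_empty]
    rintro a (h | h)
    · exact hle (hVu a h)
    · rw [Set.mem_singleton_iff] at h
      exact (hB _ _).2 (by simp [h])
  have hU1' : ((U ∪ {y}) \ H.neighborSet v).ncard ≤ (U \ G.neighborSet v).ncard + 1 := by
    refine le_trans (Set.ncard_le_ncard (t := insert y (U \ G.neighborSet v)) ?_
      (Set.toFinite _)) (Set.ncard_insert_le _ _)
    rintro a ⟨h | h, h'⟩
    · exact Or.inr ⟨h, fun h'' => h' (hle h'')⟩
    · exact Or.inl h
  have hU1r : (((U ∪ {y}) \ H.neighborSet v).ncard : ℝ) ≤ (U \ G.neighborSet v).ncard + 1 := by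
    exact_mod_cast hU1'
  have hb1 : bU (3 / 2) H u (U ∪ {y}) (V ∪ {z}) = bU (3 / 2) G u U V - 1 / 2 := by
    unfold bU
    rw [hV1, hV1', hUn, hVn]
    push_cast
    ring
  have hb2 : bV (3 / 2) H v (U ∪ {y}) (V ∪ {z}) ≤ bV (3 / 2) G v U V + 1 / 2 := by
    unfold bV
    rw [hUn, hVn]
    push_cast
    linarith
  have hb3 : bU (3 / 2) G u U V > -1 := by
    unfold bU
    rw [hV1]
    norm_num
    linarith
  refine ⟨hle huv, Or.inl hu, Or.inl hv, ?_, ?_, ?_, ?_, ?_, ?_, by linarith, by linarith,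
    by linarith⟩
  · rw [Set.disjoint_left]
    rintro a (h | h) (h' | h')
    · exact hdj a h h'
    · rw [Set.mem_singleton_iff] at h'
      exact hz'.1 (h' ▸ h)
    · rw [Set.mem_singleton_iff] at h
      exact hy'.2 (h ▸ h')
    · rw [Set.mem_singleton_iff] at h h'
      exact hzy (h'.symm.trans h)
  · refine ⟨H.connectedComponentMk u, ⟨u, v, hle huv, rfl⟩, ?_⟩
    rintro c ⟨a, b, hab, rfl⟩
    exact ConnectedComponent.sound (hreach a (hcl' a b hab))
  · ext w
    constructor
    · intro hw
      obtain ⟨p⟩ := ConnectedComponent.exact hw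
      cases p with
      | nil => exact Or.inl (Or.inl hu)
      | cons h _ => exact hcl' _ _ h
    · intro hw
      exact ConnectedComponent.sound (hreach w hw)
  · have hyG : ∀ b, ¬ G.Adj y b := fun b hb => hy (hcl y b hb)
    intro a ha b hb hab
    simp only [Set.union_singleton, Set.mem_insert_iff] at ha hb
    have := (hB a b).1 hab
    have h1 := hU a
    have h2 := hdj x
    have h3 := G.adj_comm a b
    grind
  · intro a ha b hb hab
    simp only [Set.union_singleton, Set.mem_insert_iff] at ha hb
    have := (hB a b).1 hab
    have h1 := hV a
    have h2 := hdj u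
    have h3 := G.adj_comm a b
    grind
  · rintro w ((h | h) | (h | h))
    · obtain ⟨t, ht, hwt⟩ := h2 w (Or.inl h)
      exact ⟨t, ht.imp (fun k => hle k) (fun k => hle k), hle hwt⟩
    · rw [Set.mem_singleton_iff] at h
      exact ⟨x, Or.inr (hle (hVu x hx)), (hB _ _).2 (by simp [h])⟩
    · obtain ⟨t, ht, hwt⟩ := h2 w (Or.inr h)
      exact ⟨t, ht.imp (fun k => hle k) (fun k => hle k), hle hwt⟩
    · rw [Set.mem_singleton_iff] at h
      exact ⟨u, Or.inl (hle huv.symm), (hB _ _).2 (by simp [h])⟩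
end
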